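/- arXiv:2502.08315 — 12 statements merged into one kernel-verified Lean document; each statement's English description precedes it below -/
import Mathlib

section
/- Let X be a real Hilbert space and let Q_n (n ∈ ℕ) and Q be bounded idempotent operators on X (Q_n ∘ Q_n = Q_n and Q ∘ Q = Q) such that Q_n → Q in the operator norm. Set S_n := range(Q_n) and S := range(Q) (which are closed subspaces of X), and let P_n and P denote the orthogonal projections of X onto S_n and S respectively. Then P_n → P in the operator norm. -/
open Filter

/-- `P` is the orthogonal projection of `X` onto the subspace `E`. -/
def IsOrthoProjOn {X : Type*} [NormedAddCommGroup X] [InnerProductSpace ℝ X]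
    (E : Submodule ℝ X) (P : X →L[ℝ] X) : Prop :=
  ∀ x : X, P x ∈ E ∧ x - P x ∈ Eᗮ

theorem orthoProj_facts {X : Type*} [NormedAddCommGroup X] [InnerProductSpace ℝ X]
    [CompleteSpace X] (A P : X →L[ℝ] X) (hA : A.comp A = A)
    (h : IsOrthoProjOn (LinearMap.range (A : X →ₗ[ℝ] X)) P) :
    star P = P ∧ ‖P‖ ≤ 1 ∧ ‖1 - P‖ ≤ 1 ∧ (1 - P) * A = 0 ∧ A * P = P := by
  have : (LinearMap.range (A : X →ₗ[ℝ] X)).HasOrthogonalProjection :=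
    ⟨fun x => ⟨P x, (h x).1, (h x).2⟩⟩
  have hP : P = (LinearMap.range (A : X →ₗ[ℝ] X)).starProjection := by
    ext x
    exact (Submodule.eq_starProjection_of_mem_orthogonal (h x).1 (h x).2).symm
  refine ⟨?_, ?_, ?_, ?_, ?_⟩
  · rw [hP]
    exact (isSelfAdjoint_starProjection _).star_eq
  · rw [hP]
    exact Submodule.starProjection_norm_le _
  · rw [hP, ← Submodule.starProjection_orthogonal']
    exact Submodule.starProjection_norm_le _
  · ext x
    have : P (A x) = A x := by
      rw [hP]
      exact Submodule.starProjection_eq_self_iff.2 ⟨x, rfl⟩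
    simp [this]
  · ext x
    obtain ⟨y, hy⟩ := (h x).1
    have hy' : A y = P x := hy
    have h2 : A (A y) = A y := congrArg (fun T : X →L[ℝ] X => T y) hA
    change A (P x) = P x
    rw [← hy', h2]

theorem orthoProj_bound {X : Type*} [NormedAddCommGroup X] [InnerProductSpace ℝ X]
    [CompleteSpace X] (A B P R : X →L[ℝ] X)
    (hP : ‖1 - P‖ ≤ 1) (hPA : (1 - P) * A = 0) (hR : ‖R‖ ≤ 1) (hBR : B * R = R) :
    ‖(1 - P) * R‖ ≤ ‖A - B‖ := by
  have e : (1 - P) * R = (1 - P) * (B - A) * R := by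
    rw [mul_sub, hPA, sub_zero, mul_assoc, hBR]
  rw [e, norm_sub_rev A B]
  calc ‖(1 - P) * (B - A) * R‖ ≤ ‖1 - P‖ * ‖B - A‖ * ‖R‖ :=
        (norm_mul_le _ _).trans (mul_le_mul_of_nonneg_right (norm_mul_le _ _) (norm_nonneg _))
    _ ≤ 1 * ‖B - A‖ * 1 := by gcongr
    _ = ‖B - A‖ := by ring

/-- If `Qₙ`, `Q` are bounded idempotent operators on a real Hilbert space with `Qₙ → Q`
in operator norm, then the orthogonal projections onto `range Qₙ` converge in operator
norm to the orthogonal projection onto `range Q`. -/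
theorem stmt0 {X : Type*} [NormedAddCommGroup X] [InnerProductSpace ℝ X] [CompleteSpace X]
    (Q : ℕ → X →L[ℝ] X) (Q₀ : X →L[ℝ] X)
    (hQn : ∀ n, (Q n).comp (Q n) = Q n) (hQ₀ : Q₀.comp Q₀ = Q₀)
    (hconv : Tendsto Q atTop (nhds Q₀))
    (P : ℕ → X →L[ℝ] X) (P₀ : X →L[ℝ] X)
    (hPn : ∀ n, IsOrthoProjOn (LinearMap.range (Q n : X →ₗ[ℝ] X)) (P n))
    (hP₀ : IsOrthoProjOn (LinearMap.range (Q₀ : X →ₗ[ℝ] X)) P₀) :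
    Tendsto P atTop (nhds P₀) := by
  obtain ⟨s0, n0, m0, a0, b0⟩ := orthoProj_facts Q₀ P₀ hQ₀ hP₀
  have key : ∀ n, ‖P n - P₀‖ ≤ 2 * ‖Q n - Q₀‖ := by
    intro n
    obtain ⟨s1, n1, m1, a1, b1⟩ := orthoProj_facts (Q n) (P n) (hQn n) (hPn n)
    have h1 := orthoProj_bound (Q n) Q₀ (P n) P₀ m1 a1 n0 b0
    have h2 := orthoProj_bound Q₀ (Q n) P₀ (P n) m0 a0 n1 b1
    have e : P n - P₀ = star ((1 - P₀) * P n) - (1 - P n) * P₀ := by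
      rw [star_mul, star_sub, star_one, s0, s1]
      noncomm_ring
    rw [norm_sub_rev] at h2
    rw [e]
    have h3 := norm_sub_le (star ((1 - P₀) * P n)) ((1 - P n) * P₀)
    have h4 : ‖star ((1 - P₀) * P n)‖ = ‖(1 - P₀) * P n‖ :=
      LinearIsometryEquiv.norm_map ContinuousLinearMap.adjoint ((1 - P₀) * P n)
    rw [h4] at h3
    linarith
  rw [tendsto_iff_norm_sub_tendsto_zero] at hconv ⊢
  refine squeeze_zero (fun n => norm_nonneg _) key ?_
  simpa using hconv.const_mul 2
end

section
/- Let X be a real Hilbert space, (M,d) a metric space, and let {S(m)}_{m∈M} and {U(m)}_{m∈M} be continuous subbundles of closed subspaces of X over M. Assume there is a fixed natural number n such that dim U(m) = n < ∞ for all m ∈ M, and assume that for some m₀ ∈ M one has S(m₀) ∩ U(m₀) = {0} and S(m₀) + U(m₀) = X. Then there exists ε > 0 such that for every m ∈ M with d(m, m₀) < ε one has S(m) ∩ U(m) = {0} and S(m) + U(m) = X. -/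
open Filter

/-- If `m` is near `m₀`, every vector of `range (P m)` is `P m` of a vector of `range (P m₀)`. -/
lemma eventually_onto {X : Type*} [NormedAddCommGroup X] [InnerProductSpace ℝ X] [CompleteSpace X]
    {M : Type*} [MetricSpace M] (P : M → X →L[ℝ] X) (hc : Continuous P)
    (hid : ∀ m x, P m (P m x) = P m x) (m₀ : M) :
    ∀ᶠ m in nhds m₀, ∀ z, P m z = z → ∃ y, P m (P m₀ y) = z := by
  have hA : Continuous fun m => P m * P m₀ + (1 - P m) * (1 - P m₀) := by fun_prop
  have h1 : P m₀ * P m₀ + (1 - P m₀) * (1 - P m₀) = 1 := by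
    have : P m₀ * P m₀ = P m₀ := by
      ext x
      exact hid m₀ x
    simp only [mul_sub, sub_mul, this, mul_one, one_mul]
    abel
  have hu : ∀ᶠ m in nhds m₀, IsUnit (P m * P m₀ + (1 - P m) * (1 - P m₀)) :=
    hA.continuousAt.eventually (Units.isOpen.mem_nhds (by
      change IsUnit _
      beta_reduce
      rw [h1]
      exact isUnit_one))
  filter_upwards [hu] with m hm z hz
  obtain ⟨u, hu⟩ := hm
  have hx := DFunLike.congr_fun u.mul_inv z
  rw [hu] at hx
  refine ⟨(u⁻¹ : (X →L[ℝ] X)ˣ).val z, ?_⟩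
  have h2 := congrArg (P m) hx
  simpa [hid, hz] using h2

/-- Small perturbations of a direct sum decomposition are still direct sums:
if `S`, `U` are continuous subbundles of closed subspaces of a real Hilbert space `X`
over a metric space `M`, `U(m)` has constant finite dimension `n`, and
`S(m₀) ⊕ U(m₀) = X`, then `S(m) ⊕ U(m) = X` for all `m` near `m₀`. -/
theorem stmt1 {X : Type*} [NormedAddCommGroup X] [InnerProductSpace ℝ X] [CompleteSpace X]
    {M : Type*} [MetricSpace M]
    (S U : M → Submodule ℝ X)
    (PS PU : M → X →L[ℝ] X)
    (hPScont : Continuous PS) (hPUcont : Continuous PU)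
    (hPSidem : ∀ m, (PS m).comp (PS m) = PS m)
    (hPUidem : ∀ m, (PU m).comp (PU m) = PU m)
    (hPSrange : ∀ m, LinearMap.range (PS m : X →ₗ[ℝ] X) = S m)
    (hPUrange : ∀ m, LinearMap.range (PU m : X →ₗ[ℝ] X) = U m)
    (n : ℕ) (hfin : ∀ m, FiniteDimensional ℝ (U m))
    (hdim : ∀ m, Module.finrank ℝ (U m) = n)
    (m₀ : M) (hinf₀ : S m₀ ⊓ U m₀ = ⊥) (hsup₀ : S m₀ ⊔ U m₀ = ⊤) :
    ∃ ε > 0, ∀ m, dist m m₀ < ε → S m ⊓ U m = ⊥ ∧ S m ⊔ U m = ⊤ := by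
  have hidS : ∀ m x, PS m (PS m x) = PS m x := fun m x => DFunLike.congr_fun (hPSidem m) x
  have hidU : ∀ m x, PU m (PU m x) = PU m x := fun m x => DFunLike.congr_fun (hPUidem m) x
  have memS : ∀ m x, PS m x ∈ S m := fun m x => by
    rw [← hPSrange m]
    exact ⟨x, rfl⟩
  have memU : ∀ m x, PU m x ∈ U m := fun m x => by
    rw [← hPUrange m]
    exact ⟨x, rfl⟩
  have fixS : ∀ m, ∀ x ∈ S m, PS m x = x := by
    intro m x hx
    rw [← hPSrange m] at hx
    obtain ⟨y, rfl⟩ := hx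
    exact hidS m y
  have fixU : ∀ m, ∀ x ∈ U m, PU m x = x := by
    intro m x hx
    rw [← hPUrange m] at hx
    obtain ⟨y, rfl⟩ := hx
    exact hidU m y
  have clS : IsClosed (S m₀ : Set X) := by
    have : (S m₀ : Set X) = {x | PS m₀ x = x} :=
      Set.ext fun x => ⟨fixS m₀ x, fun h => h ▸ memS m₀ x⟩
    rw [this]
    exact isClosed_eq (PS m₀).continuous continuous_id
  have clU : IsClosed (U m₀ : Set X) := by
    have : (U m₀ : Set X) = {x | PU m₀ x = x} :=
      Set.ext fun x => ⟨fixU m₀ x, fun h => h ▸ memU m₀ x⟩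
    rw [this]
    exact isClosed_eq (PU m₀).continuous continuous_id
  have hc : IsCompl (S m₀) (U m₀) :=
    ⟨disjoint_iff.mpr hinf₀, codisjoint_iff.mpr hsup₀⟩
  have ht := Submodule.IsCompl.isTopCompl_of_isClosed hc clS clU
  obtain ⟨R, hR1, hR2, hRS, hRU⟩ : ∃ R : X →L[ℝ] X, (∀ x, R x ∈ S m₀) ∧
      (∀ x, x - R x ∈ U m₀) ∧ (∀ x ∈ S m₀, R x = x) ∧ (∀ x ∈ U m₀, R x = 0) :=
    ⟨(S m₀).projectionL (U m₀) ht, Submodule.projectionL_apply_mem ht,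
      Submodule.sub_projection_mem hc,
      fun x hx => Submodule.projectionL_apply_left ht ⟨x, hx⟩,
      fun x hx => Submodule.projectionL_apply_right ht ⟨x, hx⟩⟩
  have hT : Continuous fun m => PS m * R + PU m * (1 - R) := by fun_prop
  have h1 : PS m₀ * R + PU m₀ * (1 - R) = 1 := by
    ext x
    have a := fixS m₀ _ (hR1 x)
    have b := fixU m₀ _ (hR2 x)
    change PS m₀ (R x) + PU m₀ (x - R x) = x
    rw [a, b]
    abel
  have hu : ∀ᶠ m in nhds m₀, IsUnit (PS m * R + PU m * (1 - R)) :=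
    hT.continuousAt.eventually (Units.isOpen.mem_nhds (by
      change IsUnit _
      beta_reduce
      rw [h1]
      exact isUnit_one))
  have key : ∀ᶠ m in nhds m₀, S m ⊓ U m = ⊥ ∧ S m ⊔ U m = ⊤ := by
    filter_upwards [hu, eventually_onto PS hPScont hidS m₀,
      eventually_onto PU hPUcont hidU m₀] with m hm hS hU
    obtain ⟨u, hu⟩ := hm
    have happ : ∀ x, u.val x = PS m (R x) + PU m (x - R x) := by
      intro x
      rw [hu]
      rfl
    have hr : ∀ x, u.val ((u⁻¹ : (X →L[ℝ] X)ˣ).val x) = x := DFunLike.congr_fun u.mul_inv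
    have hl : ∀ x, (u⁻¹ : (X →L[ℝ] X)ˣ).val (u.val x) = x := DFunLike.congr_fun u.inv_mul
    constructor
    · rw [eq_bot_iff]
      rintro z ⟨hzS, hzU⟩
      obtain ⟨s, hs⟩ := hS z (fixS m z hzS)
      obtain ⟨t, htt⟩ := hU z (fixU m z hzU)
      have e1 : u.val (PS m₀ s) = z := by
        rw [happ, hRS _ (memS m₀ s), hs]
        simp
      have e2 : u.val (PU m₀ t) = z := by
        rw [happ, hRU _ (memU m₀ t)]
        simpa using htt
      have e3 : PS m₀ s = PU m₀ t := by
        rw [← hl (PS m₀ s), e1, ← e2, hl]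
      have e4 : PS m₀ s ∈ S m₀ ⊓ U m₀ := ⟨memS m₀ s, e3 ▸ memU m₀ t⟩
      rw [hinf₀, Submodule.mem_bot] at e4
      rw [Submodule.mem_bot, ← e1, e4, map_zero]
    · rw [eq_top_iff]
      intro z _
      rw [← hr z, happ]
      exact Submodule.add_mem_sup (memS m _) (memU m _)
  exact Metric.eventually_nhds_iff.mp key
end

section
/- Let X be a real Hilbert space, let Q_n (n ∈ ℕ) and Q be bounded idempotent operators on X, and let T_n and T be bounded-below bounded operators on X (isomorphisms onto their ranges), with Q_n → Q and T_n → T in the operator norm. Assume range(Q_n) ⊆ range(T_n) for all n and range(Q) ⊆ range(T). Let R_n and R be the unique bounded operators on X satisfying T_n ∘ R_n = Q_n and T ∘ R = Q (they exist and are unique since T_n, T are injective with ranges containing the relevant ranges). Then R_n → R in the operator norm; moreover the subspaces range(R_n) and range(R) are closed, and the orthogonal projection onto range(R_n) converges in the operator norm to the orthogonal projection onto range(R). -/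
open Filter

/-- The distance of two orthogonal projections is at most twice the distance of idempotents
with the same ranges. -/
theorem proj_diff_le {X : Type*} [NormedAddCommGroup X] [InnerProductSpace ℝ X]
    (E E' : Submodule ℝ X) (S S' P P' : X →L[ℝ] X)
    (hS : ∀ x, S x ∈ E) (hS1 : ∀ x ∈ E, S x = x)
    (hS' : ∀ x, S' x ∈ E') (hS1' : ∀ x ∈ E', S' x = x)
    (hP : IsOrthoProjOn E P) (hP' : IsOrthoProjOn E' P') :
    ‖P' - P‖ ≤ 2 * ‖S' - S‖ := by
  have norm_le : ∀ x, ‖P x‖ ^ 2 + ‖x - P x‖ ^ 2 = ‖x‖ ^ 2 := by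
    intro x
    have h0 : inner ℝ (P x) (x - P x) = 0 := (Submodule.mem_orthogonal _ _).1 (hP x).2 _ (hP x).1
    have := norm_add_sq_real (P x) (x - P x)
    rw [h0, add_sub_cancel] at this
    linarith
  have hPx : ∀ x, ‖P x‖ ≤ ‖x‖ := fun x => by
    refine abs_le_of_sq_le_sq' ?_ (norm_nonneg x) |>.2 <;> nlinarith [norm_le x, sq_nonneg ‖x - P x‖, norm_nonneg x]
  have hPx2 : ∀ x, ‖x - P x‖ ≤ ‖x‖ := fun x => by
    refine abs_le_of_sq_le_sq' ?_ (norm_nonneg x) |>.2 <;> nlinarith [norm_le x, sq_nonneg ‖P x‖, norm_nonneg x]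
  set d := ‖S' - S‖ with hd
  have hdn : 0 ≤ d := norm_nonneg _
  have hdx : ∀ x, ‖S' x - S x‖ ≤ d * ‖x‖ := fun x => (S' - S).le_opNorm x
  have h1 : ∀ y ∈ Eᗮ, ‖P' y‖ ≤ d * ‖y‖ := by
    intro y hy
    have a1 : inner ℝ (P' y) (y - P' y) = 0 :=
      (Submodule.mem_orthogonal _ _).1 (hP' y).2 _ (hP' y).1
    have a2 : inner ℝ (S (P' y)) y = 0 := (Submodule.mem_orthogonal _ _).1 hy _ (hS _)
    have a3 : ‖P' y‖ ^ 2 = inner ℝ (S' (P' y) - S (P' y)) y := by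
      rw [hS1' _ (hP' y).1, inner_sub_left, a2, sub_zero, ← real_inner_self_eq_norm_sq]
      rw [inner_sub_right] at a1
      linarith
    have a4 := real_inner_le_norm (S' (P' y) - S (P' y)) y
    have a5 := mul_le_mul_of_nonneg_right (hdx (P' y)) (norm_nonneg y)
    rcases (norm_nonneg (P' y)).eq_or_lt with h | h
    · rw [← h]; positivity
    · refine le_of_mul_le_mul_left ?_ h
      nlinarith
  have h2 : ∀ u ∈ E, ‖u - P' u‖ ≤ d * ‖u‖ := by
    intro u hu
    have b1 : ∀ v ∈ E', inner ℝ v (u - P' u) = 0 := (Submodule.mem_orthogonal _ _).1 (hP' u).2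
    have a3 : ‖u - P' u‖ ^ 2 = inner ℝ (S u - S' u) (u - P' u) := by
      rw [inner_sub_left, b1 _ (hS' u), hS1 _ hu, ← real_inner_self_eq_norm_sq,
        inner_sub_left, b1 _ (hP' u).1]
    have a4 := real_inner_le_norm (S u - S' u) (u - P' u)
    have a5 := mul_le_mul_of_nonneg_right (hdx u) (norm_nonneg (u - P' u))
    rw [norm_sub_rev (S u)] at a4
    rcases (norm_nonneg (u - P' u)).eq_or_lt with h | h
    · rw [← h]; positivity
    · refine le_of_mul_le_mul_left ?_ h
      nlinarith
  refine ContinuousLinearMap.opNorm_le_bound _ (by positivity) fun x => ?_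
  have e : (P' - P) x = P' (x - P x) - (P x - P' (P x)) := by simp
  rw [e]
  have c1 := h1 _ (hP x).2
  have c2 := h2 _ (hP x).1
  have c3 := mul_le_mul_of_nonneg_left (hPx x) hdn
  have c4 := mul_le_mul_of_nonneg_left (hPx2 x) hdn
  have c5 := norm_sub_le (P' (x - P x)) (P x - P' (P x))
  linarith

/-- `R T` fixes the range of `R`. -/
theorem rt_fix {X : Type*} [NormedAddCommGroup X] [InnerProductSpace ℝ X]
    (Q T R : X →L[ℝ] X) (hQ : Q.comp Q = Q) (hT : ∃ c > 0, ∀ x : X, c * ‖x‖ ≤ ‖T x‖)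
    (hR : T.comp R = Q) : ∀ x ∈ LinearMap.range (R : X →ₗ[ℝ] X), (R.comp T) x = x := by
  rintro _ ⟨x, rfl⟩
  obtain ⟨c, hc, h⟩ := hT
  have hR' : ∀ y, T (R y) = Q y := fun y => by rw [← hR]; rfl
  have hQ' : ∀ y, Q (Q y) = Q y := fun y => DFunLike.congr_fun hQ y
  have := h (R (T (R x)) - R x)
  rw [map_sub, hR', hR', hQ', sub_self, norm_zero] at this
  have h0 : ‖R (T (R x)) - R x‖ ≤ 0 := by
    by_contra hh
    push Not at hh
    have := mul_pos hc hh
    rw [hR'] at this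
    linarith
  exact sub_eq_zero.1 (norm_le_zero_iff.1 h0)

theorem rt_closed {X : Type*} [NormedAddCommGroup X] [InnerProductSpace ℝ X]
    (Q T R : X →L[ℝ] X) (hQ : Q.comp Q = Q) (hT : ∃ c > 0, ∀ x : X, c * ‖x‖ ≤ ‖T x‖)
    (hR : T.comp R = Q) :
    IsClosed ((LinearMap.range (R : X →ₗ[ℝ] X) : Submodule ℝ X) : Set X) := by
  have : ((LinearMap.range (R : X →ₗ[ℝ] X) : Submodule ℝ X) : Set X)
      = {x | (R.comp T) x = x} := by
    ext x
    exact ⟨fun hx => rt_fix Q T R hQ hT hR x hx, fun hx => ⟨T x, hx⟩⟩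
  rw [this]
  exact isClosed_eq (R.comp T).continuous continuous_id

/-- If `Qₙ → Q` (idempotents) and `Tₙ → T` (bounded below) in operator norm, with
`range Qₙ ⊆ range Tₙ` and `range Q ⊆ range T`, and `Rₙ`, `R` are the unique bounded
operators with `Tₙ ∘ Rₙ = Qₙ` and `T ∘ R = Q`, then `Rₙ → R` in operator norm,
the ranges of `Rₙ` and `R` are closed, and the orthogonal projections onto
`range Rₙ` converge in operator norm to the orthogonal projection onto `range R`. -/
theorem stmt5 {X : Type*} [NormedAddCommGroup X] [InnerProductSpace ℝ X] [CompleteSpace X]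
    (Q T R : ℕ → X →L[ℝ] X) (Q₀ T₀ R₀ : X →L[ℝ] X)
    (hQn : ∀ n, (Q n).comp (Q n) = Q n) (hQ₀ : Q₀.comp Q₀ = Q₀)
    (hTn : ∀ n, ∃ c > 0, ∀ x : X, c * ‖x‖ ≤ ‖T n x‖)
    (hT₀ : ∃ c > 0, ∀ x : X, c * ‖x‖ ≤ ‖T₀ x‖)
    (hQconv : Tendsto Q atTop (nhds Q₀)) (hTconv : Tendsto T atTop (nhds T₀))
    (hrangen : ∀ n, LinearMap.range (Q n : X →ₗ[ℝ] X) ≤ LinearMap.range (T n : X →ₗ[ℝ] X))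
    (hrange₀ : LinearMap.range (Q₀ : X →ₗ[ℝ] X) ≤ LinearMap.range (T₀ : X →ₗ[ℝ] X))
    (hRn : ∀ n, (T n).comp (R n) = Q n) (hR₀ : T₀.comp R₀ = Q₀) :
    Tendsto R atTop (nhds R₀) ∧
    (∀ n, IsClosed ((LinearMap.range (R n : X →ₗ[ℝ] X) : Submodule ℝ X) : Set X)) ∧
    IsClosed ((LinearMap.range (R₀ : X →ₗ[ℝ] X) : Submodule ℝ X) : Set X) ∧
    ∀ (P : ℕ → X →L[ℝ] X) (P₀ : X →L[ℝ] X),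
      (∀ n, IsOrthoProjOn (LinearMap.range (R n : X →ₗ[ℝ] X)) (P n)) →
      IsOrthoProjOn (LinearMap.range (R₀ : X →ₗ[ℝ] X)) P₀ →
      Tendsto P atTop (nhds P₀) := by
  have hconv : Tendsto R atTop (nhds R₀) := by
    obtain ⟨c, hc, h⟩ := hT₀
    rw [tendsto_iff_norm_sub_tendsto_zero]
    have hz : Tendsto (fun n => (2 / c) * ‖Q n - (T n).comp R₀‖) atTop (nhds 0) := by
      have h1 : Tendsto (fun n => Q n - (T n).comp R₀) atTop (nhds (Q₀ - T₀.comp R₀)) :=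
        hQconv.sub (((ContinuousLinearMap.compL ℝ X X X).flip R₀).continuous.tendsto T₀ |>.comp
          hTconv)
      have h2 := (h1.norm).const_mul (2 / c)
      rwa [hR₀, sub_self, norm_zero, mul_zero] at h2
    have hev : ∀ᶠ n in atTop, ‖T n - T₀‖ < c / 2 :=
      (tendsto_iff_norm_sub_tendsto_zero.1 hTconv).eventually_lt_const (by positivity)
    refine squeeze_zero' (Eventually.of_forall fun n => norm_nonneg _) ?_ hz
    filter_upwards [hev] with n hn
    refine ContinuousLinearMap.opNorm_le_bound _ (by positivity) fun x => ?_
    set y := (R n - R₀) x with hy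
    have e : (Q n - (T n).comp R₀) x = T n y := by
      rw [← hRn n]; simp [hy]
    have e1 : ‖T n y‖ ≤ ‖Q n - (T n).comp R₀‖ * ‖x‖ := by
      rw [← e]; exact ContinuousLinearMap.le_opNorm _ _
    have e2 : ‖T n y - T₀ y‖ ≤ c / 2 * ‖y‖ :=
      ((T n - T₀).le_opNorm y).trans (by gcongr)
    have e3 := h y
    have e4 := norm_sub_norm_le (T₀ y) (T n y)
    rw [norm_sub_rev] at e4
    have e5 : c / 2 * ‖y‖ ≤ ‖Q n - (T n).comp R₀‖ * ‖x‖ := by linarith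
    calc ‖y‖ = 2 / c * (c / 2 * ‖y‖) := by field_simp
      _ ≤ 2 / c * (‖Q n - (T n).comp R₀‖ * ‖x‖) := by gcongr
      _ = _ := by ring
  refine ⟨hconv, fun n => rt_closed _ _ _ (hQn n) (hTn n) (hRn n), rt_closed _ _ _ hQ₀ hT₀ hR₀, ?_⟩
  intro P P₀ hP hP₀
  have hS : Tendsto (fun n => (R n).comp (T n)) atTop (nhds (R₀.comp T₀)) := hconv.mul hTconv
  rw [tendsto_iff_norm_sub_tendsto_zero] at hS ⊢
  have hS2 := hS.const_mul 2
  rw [mul_zero] at hS2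
  refine squeeze_zero (fun n => norm_nonneg _) (fun n => ?_) hS2
  exact proj_diff_le (LinearMap.range (R₀ : X →ₗ[ℝ] X)) (LinearMap.range (R n : X →ₗ[ℝ] X))
    (R₀.comp T₀) ((R n).comp (T n)) P₀ (P n)
    (fun x => ⟨T₀ x, rfl⟩) (rt_fix _ _ _ hQ₀ hT₀ hR₀)
    (fun x => ⟨T n x, rfl⟩) (rt_fix _ _ _ (hQn n) (hTn n) (hRn n)) hP₀ (hP n)
end

section
/- Let (M,d) be a metric space, X a real Hilbert space, and let {E_m}_{m∈M} and {F_m}_{m∈M} be continuous subbundles of closed subspaces of X over M. Assume that for every m ∈ M one has E_m + F_m = X and that the orthogonal complement E_m^⊥ is finite dimensional. Then the family {E_m ∩ F_m}_{m∈M} is an orthogonally continuous subbundle, i.e. the map sending m to the orthogonal projection of X onto the closed subspace E_m ∩ F_m is continuous in the operator norm. -/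
open Filter

lemma stmt7_aux_inner {X : Type*} [NormedAddCommGroup X] [InnerProductSpace ℝ X]
    {V : Submodule ℝ X} {P : X →L[ℝ] X} (h : IsOrthoProjOn V P) (v x : X) (hv : v ∈ V) :
    inner ℝ v (x - P x) = 0 :=
  (Submodule.mem_orthogonal V _).1 (h x).2 v hv

lemma stmt7_aux_dist {X : Type*} [NormedAddCommGroup X] [InnerProductSpace ℝ X]
    {V : Submodule ℝ X} {P : X →L[ℝ] X} (h : IsOrthoProjOn V P) (v x : X) (hv : v ∈ V) :
    ‖x - P x‖ ≤ ‖x - v‖ := by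
  have h1 := stmt7_aux_inner h (P x - v) x (V.sub_mem (h x).1 hv)
  have h2 : x - v = (P x - v) + (x - P x) := by abel
  have h3 : ‖x - v‖ * ‖x - v‖ = ‖P x - v‖ * ‖P x - v‖ + ‖x - P x‖ * ‖x - P x‖ := by
    rw [h2]
    exact norm_add_sq_eq_norm_sq_add_norm_sq_of_inner_eq_zero _ _ h1
  exact abs_le_of_sq_le_sq' (by nlinarith [mul_self_nonneg ‖P x - v‖]) (norm_nonneg _) |>.2

lemma stmt7_aux_norm {X : Type*} [NormedAddCommGroup X] [InnerProductSpace ℝ X]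
    {V : Submodule ℝ X} {P : X →L[ℝ] X} (h : IsOrthoProjOn V P) (x : X) :
    ‖P x‖ ≤ ‖x‖ := by
  have h1 := stmt7_aux_inner h (P x) x (h x).1
  have h3 : ‖x‖ * ‖x‖ = ‖P x‖ * ‖P x‖ + ‖x - P x‖ * ‖x - P x‖ := by
    have h4 := norm_add_sq_eq_norm_sq_add_norm_sq_of_inner_eq_zero _ _ h1
    rwa [add_sub_cancel] at h4
  exact abs_le_of_sq_le_sq' (by nlinarith [mul_self_nonneg ‖x - P x‖]) (norm_nonneg _) |>.2

lemma stmt7_aux_adj {X : Type*} [NormedAddCommGroup X] [InnerProductSpace ℝ X] [CompleteSpace X]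
    {V : Submodule ℝ X} {P : X →L[ℝ] X} (h : IsOrthoProjOn V P) :
    star P = P := by
  rw [ContinuousLinearMap.star_eq_adjoint]
  symm
  rw [ContinuousLinearMap.eq_adjoint_iff]
  intro x y
  have h1 := stmt7_aux_inner h (P x) y (h x).1
  have h2 := stmt7_aux_inner h (P y) x (h y).1
  rw [inner_sub_right] at h1 h2
  rw [real_inner_comm (P y) x]
  rw [real_inner_comm (P y) (P x)] at h1
  linarith

/-- Two idempotent-like maps control the difference of the orthogonal projections. -/
lemma stmt7_aux_bound {X : Type*} [NormedAddCommGroup X] [InnerProductSpace ℝ X] [CompleteSpace X]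
    {V W : Submodule ℝ X} {P Q K L : X →L[ℝ] X}
    (hP : IsOrthoProjOn V P) (hQ : IsOrthoProjOn W Q)
    (hK : ∀ x, K x ∈ V) (hK1 : ∀ x ∈ V, K x = x)
    (hL : ∀ x, L x ∈ W) (hL1 : ∀ x ∈ W, L x = x) :
    ‖P - Q‖ ≤ 2 * ‖K - L‖ := by
  have key : ∀ {V W : Submodule ℝ X} {P Q K L : X →L[ℝ] X},
      IsOrthoProjOn V P → IsOrthoProjOn W Q → (∀ x, K x ∈ V) → (∀ x ∈ W, L x = x) →
      ‖(1 - P) * Q‖ ≤ ‖K - L‖ := by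
    intro V W P Q K L hP hQ hK hL1
    refine ContinuousLinearMap.opNorm_le_bound _ (norm_nonneg _) fun x => ?_
    calc ‖((1 - P) * Q) x‖ = ‖Q x - P (Q x)‖ := by simp
      _ ≤ ‖Q x - K (Q x)‖ := stmt7_aux_dist hP _ _ (hK _)
      _ = ‖(K - L) (Q x)‖ := by
        rw [sub_apply, hL1 _ (hQ x).1, norm_sub_rev]
      _ ≤ ‖K - L‖ * ‖Q x‖ := (K - L).le_opNorm _
      _ ≤ ‖K - L‖ * ‖x‖ := by gcongr; exact stmt7_aux_norm hQ x
  have a1 := key hP hQ hK hL1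
  have a2 := key hQ hP hL hK1
  have a3 : ‖P * (1 - Q)‖ = ‖(1 - Q) * P‖ := by
    rw [← norm_star (P * (1 - Q)), star_mul, star_sub, star_one, stmt7_aux_adj hP,
      stmt7_aux_adj hQ]
  have e : P - Q = P * (1 - Q) - (1 - P) * Q := by noncomm_ring
  rw [e]
  refine (norm_sub_le _ _).trans ?_
  rw [a3]
  rw [norm_sub_rev L K] at a2
  linarith

lemma stmt7_aux_unit {X : Type*} [NormedAddCommGroup X] [InnerProductSpace ℝ X] [CompleteSpace X]
    (A B : X →L[ℝ] X)
    (h : LinearMap.range (A : X →ₗ[ℝ] X) ⊔ LinearMap.range (B : X →ₗ[ℝ] X) = ⊤) :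
    IsUnit (A * star A + B * star B) := by
  have surj : Function.Surjective (A.coprod B) := by
    intro z
    have hz : z ∈ LinearMap.range (A : X →ₗ[ℝ] X) ⊔ LinearMap.range (B : X →ₗ[ℝ] X) := by
      rw [h]; trivial
    obtain ⟨_, ⟨a, rfl⟩, _, ⟨b, rfl⟩, hab⟩ := Submodule.mem_sup.1 hz
    exact ⟨(a, b), by simpa using hab⟩
  obtain ⟨C, C0, hC⟩ := (A.coprod B).exists_preimage_norm_le surj
  have c0 : (0 : ℝ) < 1 / (2 * C ^ 2) := by positivity
  refine ContinuousLinearMap.isUnit_of_forall_le_norm_inner_map _ (c := ⟨_, c0.le⟩) c0 fun z => ?_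
  have e : inner ℝ ((A * star A + B * star B) z) z = ‖star A z‖ ^ 2 + ‖star B z‖ ^ 2 := by
    rw [ContinuousLinearMap.star_eq_adjoint, ContinuousLinearMap.star_eq_adjoint]
    change inner ℝ (A (ContinuousLinearMap.adjoint A z) + B (ContinuousLinearMap.adjoint B z)) z = _
    rw [inner_add_left]
    rw [← ContinuousLinearMap.adjoint_inner_right A, ← ContinuousLinearMap.adjoint_inner_right B,
      real_inner_self_eq_norm_sq, real_inner_self_eq_norm_sq]
  obtain ⟨⟨x, y⟩, hxy, hn⟩ := hC z
  have hx : ‖x‖ ≤ C * ‖z‖ := (norm_fst_le (x, y)).trans hn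
  have hy : ‖y‖ ≤ C * ‖z‖ := (norm_snd_le (x, y)).trans hn
  have hz : ‖z‖ ^ 2 = inner ℝ x (star A z) + inner ℝ y (star B z) := by
    rw [ContinuousLinearMap.star_eq_adjoint, ContinuousLinearMap.star_eq_adjoint,
      ContinuousLinearMap.adjoint_inner_right, ContinuousLinearMap.adjoint_inner_right,
      ← inner_add_left, ← real_inner_self_eq_norm_sq]
    congr 1
    simpa using hxy.symm
  have h1 : inner ℝ x (star A z) ≤ C * ‖z‖ * ‖star A z‖ :=
    (real_inner_le_norm _ _).trans (by gcongr)
  have h2 : inner ℝ y (star B z) ≤ C * ‖z‖ * ‖star B z‖ :=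
    (real_inner_le_norm _ _).trans (by gcongr)
  rw [e, Real.norm_of_nonneg (by positivity)]
  change ‖z‖ ^ 2 * (1 / (2 * C ^ 2)) ≤ _
  rw [mul_one_div, div_le_iff₀ (by positivity)]
  rcases eq_or_lt_of_le (norm_nonneg z) with h0 | h0
  · rw [← h0]; simp only [ne_eq, OfNat.ofNat_ne_zero, not_false_eq_true, zero_pow]; positivity
  have h3 : ‖z‖ ≤ C * (‖star A z‖ + ‖star B z‖) := by
    refine le_of_mul_le_mul_left ?_ h0
    nlinarith
  have h4 : ‖z‖ ^ 2 ≤ (C * (‖star A z‖ + ‖star B z‖)) ^ 2 := by gcongr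
  have h5 := mul_nonneg (sq_nonneg C) (sq_nonneg (‖star A z‖ - ‖star B z‖))
  nlinarith

/-- If `E`, `F` are continuous subbundles of closed subspaces of a real Hilbert space
over a metric space `M` with `E_m + F_m = X` and `dim E_mᗮ < ∞` for all `m`, then the
family `{E_m ∩ F_m}` is orthogonally continuous: the map sending `m` to the orthogonal
projection onto `E_m ⊓ F_m` is continuous in operator norm. -/
theorem stmt7 {X : Type*} [NormedAddCommGroup X] [InnerProductSpace ℝ X] [CompleteSpace X]
    {M : Type*} [MetricSpace M]
    (E F : M → Submodule ℝ X)
    (PE PF : M → X →L[ℝ] X)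
    (hPEcont : Continuous PE) (hPFcont : Continuous PF)
    (hPEidem : ∀ m, (PE m).comp (PE m) = PE m)
    (hPFidem : ∀ m, (PF m).comp (PF m) = PF m)
    (hPErange : ∀ m, LinearMap.range (PE m : X →ₗ[ℝ] X) = E m)
    (hPFrange : ∀ m, LinearMap.range (PF m : X →ₗ[ℝ] X) = F m)
    (hsum : ∀ m, E m ⊔ F m = ⊤)
    (hfin : ∀ m, FiniteDimensional ℝ ((E m)ᗮ)) :
    ∀ P : M → X →L[ℝ] X, (∀ m, IsOrthoProjOn (E m ⊓ F m) (P m)) → Continuous P := by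
  intro P hP
  rw [continuous_iff_continuousAt]
  intro m₀
  let W : M → X →L[ℝ] X := fun m => PE m * star (PE m) + PF m * star (PF m)
  have hW : Continuous W := by
    exact (hPEcont.mul hPEcont.star).add (hPFcont.mul hPFcont.star)
  have hU : ∀ m, IsUnit (W m) := fun m =>
    stmt7_aux_unit _ _ (by rw [hPErange, hPFrange, hsum])
  let G : M → X →L[ℝ] X := fun m => Ring.inverse (W m)
  have hG : ContinuousAt G m₀ := by
    obtain ⟨u, hu⟩ := hU m₀
    have := NormedRing.inverse_continuousAt u
    rw [hu] at this
    exact ContinuousAt.comp (f := W) this hW.continuousAt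
  have hWG : ∀ m, W m * G m = 1 := fun m => Ring.mul_inverse_cancel _ (hU m)
  let K : M → X →L[ℝ] X := fun m => PE m - PE m * star (PE m) * G m * (PE m - PF m)
  have hK : ContinuousAt K m₀ :=
    hPEcont.continuousAt.sub
      (((hPEcont.mul hPEcont.star).continuousAt.mul hG).mul (hPEcont.sub hPFcont).continuousAt)
  have hE : ∀ m x, PE m x ∈ E m := fun m x => hPErange m ▸ ⟨x, rfl⟩
  have hF : ∀ m x, PF m x ∈ F m := fun m x => hPFrange m ▸ ⟨x, rfl⟩
  have hE1 : ∀ m, ∀ x ∈ E m, PE m x = x := by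
    intro m x hx
    rw [← hPErange] at hx
    obtain ⟨y, rfl⟩ := hx
    exact DFunLike.congr_fun (hPEidem m) y
  have hF1 : ∀ m, ∀ x ∈ F m, PF m x = x := by
    intro m x hx
    rw [← hPFrange] at hx
    obtain ⟨y, rfl⟩ := hx
    exact DFunLike.congr_fun (hPFidem m) y
  have hKmem : ∀ m x, K m x ∈ E m ⊓ F m := by
    intro m x
    refine ⟨(E m).sub_mem (hE m x) (hE m _), ?_⟩
    have e : K m = PF m + PF m * (star (PF m) * G m * (PE m - PF m)) := by
      have h1 : K m = PE m - W m * G m * (PE m - PF m)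
          + PF m * (star (PF m) * G m * (PE m - PF m)) := by
        simp only [K, W]; noncomm_ring
      rw [h1, hWG]; noncomm_ring
    rw [e]
    exact (F m).add_mem (hF m x) (hF m _)
  have hKfix : ∀ m, ∀ x ∈ E m ⊓ F m, K m x = x := by
    intro m x hx
    simp [K, hE1 m x hx.1, hF1 m x hx.2]
  rw [ContinuousAt, tendsto_iff_norm_sub_tendsto_zero] at hK ⊢
  refine squeeze_zero (fun _ => norm_nonneg _) (fun m => stmt7_aux_bound (hP m) (hP m₀)
    (hKmem m) (hKfix m) (hKmem m₀) (hKfix m₀)) ?_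
  simpa using hK.const_mul 2
end

section
/- Let (M,d) be a compact metric space, X a real Hilbert space, and let {S(x)}_{x∈M}, {U(x)}_{x∈M}, {V(x)}_{x∈M} be continuous subbundles of closed subspaces of X over M such that for every x ∈ M: S(x) ∩ U(x) = {0}, S(x) + U(x) = X, and S(x) ∩ V(x) = {0}. Assume each V(x) is finite dimensional with the same dimension for every x ∈ M. Then there exists M' > 0 such that for all x ∈ M and every nonzero v ∈ V(x), writing v = v^s + v^u with v^s ∈ S(x) and v^u ∈ U(x) (so v^u ≠ 0), one has ‖v^s‖ ≤ M' ‖v^u‖; that is, the inclination of V(x) relative to the decomposition S(x) ⊕ U(x) = X is bounded uniformly on M. -/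
open Filter

/-- Over a compact metric space, the inclination of a finite-dimensional continuous
subbundle `V` (transverse to `S`) relative to a continuous decomposition
`S(x) ⊕ U(x) = X` is uniformly bounded. -/
theorem stmt8 {X : Type*} [NormedAddCommGroup X] [InnerProductSpace ℝ X] [CompleteSpace X]
    {M : Type*} [MetricSpace M] [CompactSpace M]
    (S U V : M → Submodule ℝ X)
    (PS PU PV : M → X →L[ℝ] X)
    (hPScont : Continuous PS) (hPUcont : Continuous PU) (hPVcont : Continuous PV)
    (hPSidem : ∀ m, (PS m).comp (PS m) = PS m)
    (hPUidem : ∀ m, (PU m).comp (PU m) = PU m)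
    (hPVidem : ∀ m, (PV m).comp (PV m) = PV m)
    (hPSrange : ∀ m, LinearMap.range (PS m : X →ₗ[ℝ] X) = S m)
    (hPUrange : ∀ m, LinearMap.range (PU m : X →ₗ[ℝ] X) = U m)
    (hPVrange : ∀ m, LinearMap.range (PV m : X →ₗ[ℝ] X) = V m)
    (hSUinf : ∀ m, S m ⊓ U m = ⊥) (hSUsup : ∀ m, S m ⊔ U m = ⊤)
    (hSV : ∀ m, S m ⊓ V m = ⊥)
    (hfin : ∀ m, FiniteDimensional ℝ (V m))
    (n : ℕ) (hdim : ∀ m, Module.finrank ℝ (V m) = n) :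
    ∃ M' > 0, ∀ m : M, ∀ v vs vu : X,
      v ∈ V m → v ≠ 0 → vs ∈ S m → vu ∈ U m → v = vs + vu →
      ‖vs‖ ≤ M' * ‖vu‖ := by
  have key : ∀ s : Set M, s = Set.univ → ∃ C > 0, ∀ m ∈ s, ∀ v vs vu : X,
      v ∈ V m → v ≠ 0 → vs ∈ S m → vu ∈ U m → v = vs + vu → ‖vs‖ ≤ C * ‖vu‖ := by
    intro s hs
    have hcomp : IsCompact s := hs ▸ isCompact_univ
    refine hcomp.induction_on (p := fun s => ∃ C > 0, ∀ m ∈ s, ∀ v vs vu : X,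
      v ∈ V m → v ≠ 0 → vs ∈ S m → vu ∈ U m → v = vs + vu → ‖vs‖ ≤ C * ‖vu‖) ?_ ?_ ?_ ?_
    · exact ⟨1, one_pos, by simp⟩
    · rintro s t hst ⟨C, hC, h⟩
      exact ⟨C, hC, fun m hm => h m (hst hm)⟩
    · rintro s t ⟨C, hC, h⟩ ⟨D, hD, h'⟩
      refine ⟨C + D, by positivity, ?_⟩
      rintro m (hm | hm) v vs vu h1 h2 h3 h4 h5
      · have := h m hm v vs vu h1 h2 h3 h4 h5
        nlinarith [norm_nonneg vu]
      · have := h' m hm v vs vu h1 h2 h3 h4 h5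
        nlinarith [norm_nonneg vu]
    · intro m0 _
      have fixS : ∀ m x, x ∈ S m → PS m x = x := by
        intro m x hx
        rw [← hPSrange m] at hx
        obtain ⟨y, rfl⟩ := hx
        exact congrArg (fun f : X →L[ℝ] X => f y) (hPSidem m)
      have fixV : ∀ m x, x ∈ V m → PV m x = x := by
        intro m x hx
        rw [← hPVrange m] at hx
        obtain ⟨y, rfl⟩ := hx
        exact congrArg (fun f : X →L[ℝ] X => f y) (hPVidem m)
      let Q : M → X →L[ℝ] X := fun m => ContinuousLinearMap.id ℝ X - PS m
      let T : M → X →L[ℝ] X := fun m => (Q m).comp (PV m)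
      have hQ : Continuous Q := continuous_const.sub hPScont
      have hT : Continuous T := hQ.clm_comp hPVcont
      have := hfin m0
      have hker : LinearMap.ker ((Q m0 : X →ₗ[ℝ] X).comp (V m0).subtype) = ⊥ := by
        rw [LinearMap.ker_eq_bot']
        intro x hx
        have hx' : (x : X) - PS m0 x = 0 := hx
        have h1 : (x : X) ∈ S m0 := by
          rw [sub_eq_zero.mp hx', ← hPSrange m0]
          exact ⟨x, rfl⟩
        have h2 : (x : X) ∈ S m0 ⊓ V m0 := ⟨h1, x.2⟩
        rw [hSV m0] at h2
        exact Subtype.ext ((Submodule.mem_bot ℝ).mp h2)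
      obtain ⟨K, hK, hanti⟩ := LinearMap.exists_antilipschitzWith _ hker
      have hK' : (0 : ℝ) < K := hK
      have hbd : ∀ w ∈ V m0, ‖w‖ ≤ K * ‖Q m0 w‖ := by
        intro w hw
        have := hanti.le_mul_dist ⟨w, hw⟩ 0
        rw [map_zero, dist_zero_right, dist_zero_right] at this
        exact this
      have e1 : ∀ᶠ m in nhds m0, K * ‖T m - T m0‖ + ‖PV m - PV m0‖ < 1 / 2 := by
        have hc : Continuous fun m => (K : ℝ) * ‖T m - T m0‖ + ‖PV m - PV m0‖ :=
          (continuous_const.mul (hT.sub continuous_const).norm).add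
            (hPVcont.sub continuous_const).norm
        exact hc.continuousAt.eventually_lt continuousAt_const (by simp)
      have e2 : ∀ᶠ m in nhds m0, ‖Q m‖ < ‖Q m0‖ + 1 :=
        hQ.norm.continuousAt.eventually_lt continuousAt_const (by simp)
      refine ⟨_, mem_nhdsWithin_of_mem_nhds (e1.and e2),
        2 * K * (‖Q m0‖ + 1) + 1, by positivity, ?_⟩
      rintro m ⟨h1, h2⟩ v vs vu hv - hvs hvu hsum
      have a1 : ‖v‖ ≤ ‖PV m0 v‖ + ‖PV m - PV m0‖ * ‖v‖ := by
        have := (PV m - PV m0).le_opNorm v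
        have e : v = PV m0 v + (PV m - PV m0) v := by
          simp [fixV m v hv]
        calc ‖v‖ = ‖PV m0 v + (PV m - PV m0) v‖ := by rw [← e]
          _ ≤ _ := (norm_add_le _ _).trans (by gcongr)
      have a2 : ‖PV m0 v‖ ≤ K * ‖T m0 v‖ :=
        hbd _ (by rw [← hPVrange m0]; exact ⟨v, rfl⟩)
      have a3 : ‖T m0 v‖ ≤ ‖T m v‖ + ‖T m - T m0‖ * ‖v‖ := by
        have := (T m - T m0).le_opNorm v
        have e : T m0 v = T m v - (T m - T m0) v := by simp
        calc ‖T m0 v‖ = ‖T m v - (T m - T m0) v‖ := by rw [← e]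
          _ ≤ _ := (norm_sub_le _ _).trans (by gcongr)
      have a4 : ‖T m v‖ ≤ (‖Q m0‖ + 1) * ‖vu‖ := by
        have e : T m v = Q m vu := by
          change Q m (PV m v) = Q m vu
          rw [fixV m v hv, hsum, map_add]
          have : Q m vs = 0 := by
            change vs - PS m vs = 0
            rw [fixS m vs hvs, sub_self]
          rw [this, zero_add]
        rw [e]
        exact ((Q m).le_opNorm vu).trans (by gcongr)
      have a5 : ‖vs‖ ≤ ‖v‖ + ‖vu‖ := by
        have e : vs = v - vu := by rw [hsum]; abel
        rw [e]; exact norm_sub_le _ _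
      have a6 := mul_le_mul_of_nonneg_left a3 hK'.le
      have a7 := mul_le_mul_of_nonneg_left a4 hK'.le
      have a8 := mul_le_mul_of_nonneg_right h1.le (norm_nonneg v)
      linarith
  obtain ⟨C, hC, h⟩ := key Set.univ rfl
  exact ⟨C, hC, fun m => h m (Set.mem_univ m)⟩
end

section
/- Let X be a real Hilbert space, Γ a nonempty set, and let {S(x)}_{x∈Γ} and {U(x)}_{x∈Γ} be families of closed subspaces of X (no continuity assumed) such that S(x) ∩ U(x) = {0} and S(x) + U(x) = X for all x ∈ Γ. Assume there exists M > 0 such that for every x ∈ Γ and every nonzero v ∈ S(x) one has ‖P_{U(x)} v‖ ≤ M ‖v − P_{U(x)} v‖, where P_{U(x)} is the orthogonal projection onto U(x) (i.e. the inclination of S(x) relative to U(x) ⊕ U(x)^⊥ = X is at most M). Then there exists M' > 0 such that for every x ∈ Γ the oblique projection π_x of X onto S(x) along U(x) (the unique bounded idempotent operator with range S(x) and kernel U(x)) satisfies ‖π_x‖ + ‖I − π_x‖ ≤ M'. -/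
open Filter

/-- If `{S(x)}`, `{U(x)}` are families of closed complementary subspaces of a real
Hilbert space indexed by a nonempty set `Γ`, and the inclination of `S(x)` relative
to `U(x) ⊕ U(x)ᗮ = X` is uniformly bounded by `M`, then the norms of the oblique
projections onto `S(x)` along `U(x)` are uniformly bounded. -/
theorem stmt9 {X : Type*} [NormedAddCommGroup X] [InnerProductSpace ℝ X] [CompleteSpace X]
    {Γ : Type*} [Nonempty Γ]
    (S U : Γ → Submodule ℝ X)
    (hSclosed : ∀ x, IsClosed ((S x : Submodule ℝ X) : Set X))
    (hUclosed : ∀ x, IsClosed ((U x : Submodule ℝ X) : Set X))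
    (hinf : ∀ x, S x ⊓ U x = ⊥) (hsup : ∀ x, S x ⊔ U x = ⊤)
    (PU : Γ → X →L[ℝ] X) (hPU : ∀ x, IsOrthoProjOn (U x) (PU x))
    (M : ℝ) (hM : 0 < M)
    (hbound : ∀ x : Γ, ∀ v ∈ S x, v ≠ 0 → ‖PU x v‖ ≤ M * ‖v - PU x v‖) :
    ∃ M' > 0, ∀ x : Γ, ∀ π : X →L[ℝ] X,
      π.comp π = π → LinearMap.range (π : X →ₗ[ℝ] X) = S x → LinearMap.ker (π : X →ₗ[ℝ] X) = U x →
      ‖π‖ + ‖ContinuousLinearMap.id ℝ X - π‖ ≤ M' := by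
  refine ⟨(M + 1) + (1 + (M + 1)), by positivity, ?_⟩
  intro x π hidem hrange hker
  have key : ∀ z, ‖π z‖ ≤ (M + 1) * ‖z‖ := by
    intro z
    have hvS : π z ∈ S x := by
      rw [← hrange]; exact ⟨z, rfl⟩
    have hzU : z - π z ∈ U x := by
      rw [← hker]
      have h := congrArg (fun f : X →L[ℝ] X => f z) hidem
      simp only [ContinuousLinearMap.comp_apply] at h
      simp [LinearMap.mem_ker, h]
    obtain ⟨h1, h2⟩ := hPU x z
    obtain ⟨h3, h4⟩ := hPU x (π z)
    have hA : (z - PU x z) - (π z - PU x (π z)) ∈ (U x)ᗮ := Submodule.sub_mem _ h2 h4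
    have hB : (z - PU x z) - (π z - PU x (π z)) ∈ U x := by
      have : (z - PU x z) - (π z - PU x (π z)) = (z - π z) - (PU x z - PU x (π z)) := by abel
      rw [this]
      exact Submodule.sub_mem _ hzU (Submodule.sub_mem _ h1 h3)
    have h0 : (z - PU x z) - (π z - PU x (π z)) = 0 := by
      have := (Submodule.mem_orthogonal _ _).1 hA _ hB
      exact inner_self_eq_zero.1 this
    have heq : π z - PU x (π z) = z - PU x z := (sub_eq_zero.1 h0).symm
    have hle : ‖z - PU x z‖ ≤ ‖z‖ := by
      have ho := (Submodule.mem_orthogonal _ _).1 h2 _ h1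
      have hp := norm_add_sq_real (PU x z) (z - PU x z)
      rw [ho, add_sub_cancel] at hp
      nlinarith [norm_nonneg z, norm_nonneg (z - PU x z), sq_nonneg ‖PU x z‖]
    by_cases hv : π z = 0
    · rw [hv, norm_zero]; positivity
    · have hb := hbound x _ hvS hv
      rw [heq] at hb
      have ht : ‖π z‖ ≤ ‖PU x (π z)‖ + ‖z - PU x z‖ := by
        rw [← heq]
        simpa using norm_add_le (PU x (π z)) (π z - PU x (π z))
      nlinarith
  have hn : ‖π‖ ≤ M + 1 := π.opNorm_le_bound (by positivity) key
  have hi : ‖ContinuousLinearMap.id ℝ X‖ ≤ 1 := ContinuousLinearMap.norm_id_le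
  have := norm_sub_le (ContinuousLinearMap.id ℝ X) π
  linarith
end

section
/- Let (M,d) be a metric space, A ⊆ M a nonempty set, U ⊆ M, and T : M → M a map with T(U) ⊆ U that is Lipschitz on U with constant L₁ > 1 (d(T x, T y) ≤ L₁ d(x,y) for all x, y ∈ U). Assume there exist C > 1 and γ > 0 such that for every n ∈ ℕ and every x ∈ U, inf_{a∈A} d(T^n x, a) ≤ C e^{−γ n}. Then there exist C₂ > 0 and α ∈ (0,1) — one may take α = γ/(γ + ln L₁) — such that for every δ with 0 < δ < 1 and every δ-pseudo-orbit x : ℤ → U of T contained in U, one has inf_{a∈A} d(x_n, a) ≤ C₂ δ^α for all n ∈ ℤ. -/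
/-- If `A` attracts the positively invariant set `U` exponentially and `T` is Lipschitz
on `U` with constant `L₁ > 1`, then every `δ`-pseudo-orbit of `T` in `U` stays within
`C₂ δ^α` of `A`, where `α = γ/(γ + ln L₁) ∈ (0,1)`. -/
theorem stmt12 {M : Type*} [MetricSpace M] (T : M → M)
    (A U : Set M) (hA : A.Nonempty) (hTU : Set.MapsTo T U U)
    (L₁ : ℝ) (hL₁ : 1 < L₁)
    (hLip : ∀ x ∈ U, ∀ y ∈ U, dist (T x) (T y) ≤ L₁ * dist x y)
    (C γ : ℝ) (hC : 1 < C) (hγ : 0 < γ)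
    (hattr : ∀ n : ℕ, ∀ x ∈ U, Metric.infDist (T^[n] x) A ≤ C * Real.exp (-γ * n)) :
    0 < γ / (γ + Real.log L₁) ∧ γ / (γ + Real.log L₁) < 1 ∧
    ∃ C₂ > 0, ∀ δ : ℝ, 0 < δ → δ < 1 → ∀ x : ℤ → M,
      (∀ n : ℤ, x n ∈ U) → (∀ n : ℤ, dist (T (x n)) (x (n + 1)) ≤ δ) →
      ∀ n : ℤ, Metric.infDist (x n) A ≤ C₂ * δ ^ (γ / (γ + Real.log L₁)) := by
  have hl : 0 < Real.log L₁ := Real.log_pos hL₁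
  have hs : 0 < γ + Real.log L₁ := by positivity
  have hL0 : 0 < L₁ - 1 := by linarith
  refine ⟨by positivity, by rw [div_lt_one hs]; linarith,
    1 / (L₁ - 1) + C * Real.exp γ, by positivity, ?_⟩
  intro δ hδ hδ1 x hxU hx n
  have hiter : ∀ (k : ℕ) (y : M), y ∈ U → T^[k] y ∈ U := fun k y hy => hTU.iterate k hy
  have key : ∀ (k : ℕ) (m : ℤ),
      dist (T^[k] (x m)) (x (m + k)) ≤ δ * ((L₁ ^ k - 1) / (L₁ - 1)) := by
    intro k m
    induction k with
    | zero => simp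
    | succ k ih =>
      rw [Function.iterate_succ_apply']
      have h1 := hLip _ (hiter k _ (hxU m)) _ (hxU (m + k))
      have h2 := hx (m + k)
      have h3 := dist_triangle (T (T^[k] (x m))) (T (x (m + k))) (x (m + k + 1))
      have h4 : L₁ * dist (T^[k] (x m)) (x (m + k)) ≤ L₁ * (δ * ((L₁ ^ k - 1) / (L₁ - 1))) :=
        mul_le_mul_of_nonneg_left ih (by linarith)
      have h5 : δ * ((L₁ ^ (k + 1) - 1) / (L₁ - 1))
          = L₁ * (δ * ((L₁ ^ k - 1) / (L₁ - 1))) + δ := by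
        field_simp
        ring
      have h6 : m + ((k + 1 : ℕ) : ℤ) = m + k + 1 := by push_cast; ring
      rw [h6, h5]
      linarith
  obtain ⟨t, ht⟩ : ∃ t, t = -Real.log δ / (γ + Real.log L₁) := ⟨_, rfl⟩
  have hlogδ : Real.log δ < 0 := Real.log_neg hδ hδ1
  have ht0 : 0 ≤ t := by rw [ht]; exact div_nonneg (by linarith) hs.le
  have hlt : Real.log δ = -t * (γ + Real.log L₁) := by rw [ht]; field_simp
  have hpow : δ ^ (γ / (γ + Real.log L₁)) = Real.exp (-γ * t) := by
    rw [Real.rpow_def_of_pos hδ, hlt]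
    congr 1
    field_simp
  have hk1 := Nat.floor_le ht0
  have hk2 := Nat.lt_floor_add_one t
  generalize ⌊t⌋₊ = k at hk1 hk2
  have hA1 : Real.exp (-γ * k) ≤ Real.exp γ * Real.exp (-γ * t) := by
    rw [← Real.exp_add]
    apply Real.exp_le_exp.2
    nlinarith
  have hB : δ * L₁ ^ k ≤ Real.exp (-γ * t) := by
    have e1 : δ * L₁ ^ k = Real.exp (Real.log δ + k * Real.log L₁) := by
      rw [Real.exp_add, Real.exp_log hδ, Real.exp_nat_mul, Real.exp_log (by linarith)]
    rw [e1, hlt]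
    apply Real.exp_le_exp.2
    nlinarith
  have h1 := key k (n - k)
  rw [sub_add_cancel] at h1
  have h2 := hattr k _ (hxU (n - k))
  have h3 : Metric.infDist (x n) A ≤
      Metric.infDist (T^[k] (x (n - k))) A + dist (x n) (T^[k] (x (n - k))) :=
    Metric.infDist_le_infDist_add_dist
  rw [dist_comm] at h3
  have h4 : δ * ((L₁ ^ k - 1) / (L₁ - 1)) ≤ 1 / (L₁ - 1) * Real.exp (-γ * t) := by
    rw [← mul_div_assoc, one_div_mul_eq_div]
    apply div_le_div_of_nonneg_right _ hL0.le
    linarith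
  have h5 : C * Real.exp (-γ * k) ≤ C * (Real.exp γ * Real.exp (-γ * t)) :=
    mul_le_mul_of_nonneg_left hA1 (by linarith)
  rw [hpow, add_mul, mul_assoc C]
  linarith
end

section
/- Let (M,d) be a metric space, A ⊆ M a nonempty set, U ⊆ M, and T : M → M a map with T(U) ⊆ U that is Lipschitz on U with constant L₁ < 1 (d(T x, T y) ≤ L₁ d(x,y) for all x, y ∈ U). Assume there exist C > 1 and γ > 0 such that for every n ∈ ℕ and every x ∈ U, inf_{a∈A} d(T^n x, a) ≤ C e^{−γ n}. Then there exists L > 0 such that for every δ with 0 < δ < 1 and every δ-pseudo-orbit x : ℤ → U of T contained in U, one has inf_{a∈A} d(x_n, a) ≤ L δ for all n ∈ ℤ. -/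
/-- If `A` attracts the positively invariant set `U` exponentially and `T` is Lipschitz
on `U` with constant `L₁ < 1` (a contraction), then every `δ`-pseudo-orbit of `T` in `U`
stays within `L δ` of `A`. -/
theorem stmt13 {M : Type*} [MetricSpace M] (T : M → M)
    (A U : Set M) (hA : A.Nonempty) (hTU : Set.MapsTo T U U)
    (L₁ : ℝ) (hL₁ : L₁ < 1)
    (hLip : ∀ x ∈ U, ∀ y ∈ U, dist (T x) (T y) ≤ L₁ * dist x y)
    (C γ : ℝ) (hC : 1 < C) (hγ : 0 < γ)
    (hattr : ∀ n : ℕ, ∀ x ∈ U, Metric.infDist (T^[n] x) A ≤ C * Real.exp (-γ * n)) :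
    ∃ L > 0, ∀ δ : ℝ, 0 < δ → δ < 1 → ∀ x : ℤ → M,
      (∀ n : ℤ, x n ∈ U) → (∀ n : ℤ, dist (T (x n)) (x (n + 1)) ≤ δ) →
      ∀ n : ℤ, Metric.infDist (x n) A ≤ L * δ := by
  obtain ⟨K, hK0, hK1, hKL⟩ : ∃ K : ℝ, 0 ≤ K ∧ K < 1 ∧ L₁ ≤ K :=
    ⟨max L₁ 0, le_max_right _ _, max_lt hL₁ one_pos, le_max_left _ _⟩
  have h1K : 0 < 1 - K := by linarith
  refine ⟨1 / (1 - K), by positivity, ?_⟩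
  intro δ hδ _ x hxU hx n
  have hfix : K * (1 / (1 - K) * δ) + δ = 1 / (1 - K) * δ := by
    field_simp
    ring
  have key : ∀ (k : ℕ) (m : ℤ), dist (T^[k] (x m)) (x (m + k)) ≤ 1 / (1 - K) * δ := by
    intro k m
    induction k with
    | zero =>
      simp only [Function.iterate_zero, id, Nat.cast_zero, add_zero, dist_self]
      positivity
    | succ k ih =>
      rw [Function.iterate_succ_apply', Nat.cast_succ, ← add_assoc]
      have h1 := hLip _ (hTU.iterate k (hxU m)) _ (hxU (m + k))
      have h2 := hx (m + k)
      have h3 := dist_triangle (T (T^[k] (x m))) (T (x (m + k))) (x (m + k + 1))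
      have h4 : L₁ * dist (T^[k] (x m)) (x (m + k)) ≤ K * (1 / (1 - K) * δ) :=
        (mul_le_mul_of_nonneg_right hKL dist_nonneg).trans (mul_le_mul_of_nonneg_left ih hK0)
      linarith
  have bound : ∀ k : ℕ, Metric.infDist (x n) A ≤ C * Real.exp (-γ * k) + 1 / (1 - K) * δ := by
    intro k
    have h1 := key k (n - k)
    rw [sub_add_cancel, dist_comm] at h1
    have h2 := hattr k _ (hxU (n - k))
    have h3 := Metric.infDist_le_infDist_add_dist (s := A) (x := x n) (y := T^[k] (x (n - k)))
    linarith
  have hlim : Filter.Tendsto (fun k : ℕ => C * Real.exp (-γ * k) + 1 / (1 - K) * δ)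
      Filter.atTop (nhds (C * 0 + 1 / (1 - K) * δ)) := by
    refine Filter.Tendsto.add_const _ (Filter.Tendsto.const_mul _ ?_)
    refine Real.tendsto_exp_atBot.comp ?_
    exact tendsto_natCast_atTop_atTop.const_mul_atTop_of_neg (by linarith)
  have := ge_of_tendsto' hlim bound
  simpa using this
end

section
/- Let (M,d) be a metric space, T : M → M, A ⊆ M, and U ⊆ M with A ⊆ U, T(U) ⊆ U, and T Lipschitz on U with constant L₁ (d(T x, T y) ≤ L₁ d(x,y) for all x, y ∈ U). Assume: (i) T has the Lipschitz shadowing property on A, i.e. there exist d₀' > 0 and L > 0 such that for every δ with 0 ≤ δ ≤ d₀' and every sequence y : ℤ → A with d(T(y_n), y_{n+1}) ≤ δ for all n ∈ ℤ, there exists an orbit z : ℤ → A of T (T(z_n) = z_{n+1} for all n) with d(z_n, y_n) ≤ Lδ for all n ∈ ℤ; (ii) there exist C > 0 and α ∈ (0,1) such that for every δ with 0 ≤ δ < 1 and every δ-pseudo-orbit x : ℤ → U of T contained in U, there exists a sequence x̃ : ℤ → A with d(x_n, x̃_n) ≤ C δ^α for all n ∈ ℤ. Then T has the α-Hölder shadowing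 property on U: there exist d₀ > 0 and C₃ > 0 such that every δ-pseudo-orbit x : ℤ → U of T with 0 ≤ δ ≤ d₀ is C₃ δ^α-shadowed by an orbit of T contained in A (there exists z : ℤ → A with T(z_n) = z_{n+1} and d(x_n, z_n) ≤ C₃ δ^α for all n ∈ ℤ). -/
/-- If `T` has the Lipschitz shadowing property on `A` and every `δ`-pseudo-orbit in
`U` lies within `C δ^α` of some sequence in `A`, then `T` has the `α`-Hölder shadowing
property on `U`, with shadowing orbits contained in `A`. -/
theorem stmt15 {M : Type*} [MetricSpace M] (T : M → M) (A U : Set M)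
    (hAU : A ⊆ U) (hTU : Set.MapsTo T U U)
    (L₁ : ℝ) (hLip : ∀ x ∈ U, ∀ y ∈ U, dist (T x) (T y) ≤ L₁ * dist x y)
    (d₀' L : ℝ) (hd₀' : 0 < d₀') (hL : 0 < L)
    (hshadA : ∀ δ : ℝ, 0 ≤ δ → δ ≤ d₀' → ∀ y : ℤ → M, (∀ n : ℤ, y n ∈ A) →
      (∀ n : ℤ, dist (T (y n)) (y (n + 1)) ≤ δ) →
      ∃ z : ℤ → M, (∀ n : ℤ, z n ∈ A) ∧ (∀ n : ℤ, T (z n) = z (n + 1)) ∧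
        ∀ n : ℤ, dist (z n) (y n) ≤ L * δ)
    (C α : ℝ) (hC : 0 < C) (hα0 : 0 < α) (hα1 : α < 1)
    (happrox : ∀ δ : ℝ, 0 ≤ δ → δ < 1 → ∀ x : ℤ → M, (∀ n : ℤ, x n ∈ U) →
      (∀ n : ℤ, dist (T (x n)) (x (n + 1)) ≤ δ) →
      ∃ xt : ℤ → M, (∀ n : ℤ, xt n ∈ A) ∧ ∀ n : ℤ, dist (x n) (xt n) ≤ C * δ ^ α) :
    ∃ d₀ > 0, ∃ C₃ > 0, ∀ δ : ℝ, 0 ≤ δ → δ ≤ d₀ → ∀ x : ℤ → M,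
      (∀ n : ℤ, x n ∈ U) → (∀ n : ℤ, dist (T (x n)) (x (n + 1)) ≤ δ) →
      ∃ z : ℤ → M, (∀ n : ℤ, z n ∈ A) ∧ (∀ n : ℤ, T (z n) = z (n + 1)) ∧
        ∀ n : ℤ, dist (x n) (z n) ≤ C₃ * δ ^ α := by
  have hK : 0 < |L₁| * C + 1 + C := by positivity
  set K := |L₁| * C + 1 + C with hKdef
  refine ⟨min (1/2) ((d₀' / K) ^ α⁻¹), by positivity, C + L * K, by positivity, ?_⟩
  intro δ h0 hδ x hxU hx
  have h1 : δ ≤ 1/2 := hδ.trans (min_le_left _ _)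
  have h2 : δ ≤ (d₀' / K) ^ α⁻¹ := hδ.trans (min_le_right _ _)
  have h3 : δ ^ α ≤ d₀' / K := by
    have := Real.rpow_le_rpow h0 h2 hα0.le
    rwa [Real.rpow_inv_rpow (by positivity) hα0.ne'] at this
  have h4 : δ ≤ δ ^ α := Real.self_le_rpow_of_le_one h0 (by linarith) hα1.le
  have h5 : 0 ≤ δ ^ α := Real.rpow_nonneg h0 _
  obtain ⟨y, hyA, hy⟩ := happrox δ h0 (by linarith) x hxU hx
  obtain ⟨z, hzA, hz, hzy⟩ := hshadA (K * δ ^ α) (by positivity)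
    (by rw [le_div_iff₀ hK] at h3; linarith) y hyA (by
      intro n
      have a1 : dist (T (x n)) (T (y n)) ≤ |L₁| * (C * δ ^ α) :=
        (hLip _ (hxU n) _ (hAU (hyA n))).trans
          (mul_le_mul (le_abs_self _) (hy n) dist_nonneg (abs_nonneg _))
      have a2 := dist_triangle4 (T (y n)) (T (x n)) (x (n+1)) (y (n+1))
      rw [dist_comm (T (y n)) (T (x n))] at a2
      have a3 := hx n
      have a4 := hy (n+1)
      have a5 : K * δ ^ α = |L₁| * (C * δ ^ α) + δ ^ α + C * δ ^ α := by
        rw [hKdef]; ring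
      linarith)
  refine ⟨z, hzA, hz, fun n => ?_⟩
  have b1 := dist_triangle (x n) (y n) (z n)
  have b2 := hzy n
  rw [dist_comm] at b2
  have b3 := hy n
  have b4 : (C + L * K) * δ ^ α = C * δ ^ α + L * (K * δ ^ α) := by ring
  linarith
end

section
/- Let (M,d) be a metric space, T : M → M, A ⊆ M nonempty, and U ⊆ M with A ⊆ U and T(U) ⊆ U. Assume: (i) there exist C > 1 and γ > 0 with inf_{a∈A} d(T^n x, a) ≤ C e^{−γ n} for all x ∈ U and n ∈ ℕ; (ii) there is L₁ > 1 and, for each n ≥ 1, a constant L_n with 1 < L_n ≤ L₁^n such that d(T^n x, T^n y) ≤ L_n d(x,y) for all x, y ∈ U; (iii) limsup_{n→∞} n / ln(L_n) = +∞. Then there exists C₃ > 0 with the following property: for every α ∈ (0,1) there exists N ∈ ℕ, N ≥ 1, such that for every δ ∈ (0,1), every map S : M → M with sup_{x∈U} d(T^N x, S^N x) ≤ δ, and every set A' ⊆ U such that each point of A' lies on a bi-infinite orbit of S contained in A' (for every a ∈ A' there is ξ : ℤ → A' with ξ_0 = a and S(ξ_n) = ξ_{n+1} for all n ∈ ℤ),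 one has the Hausdorff semidistance bound dist_H(A', A) = sup_{a'∈A'} inf_{a∈A} d(a', a) ≤ C₃ δ^α. -/
/-- Continuity of attractors: if `A` attracts `U` exponentially, the Lipschitz
constants `L n` of `T^[n]` on `U` satisfy `limsup n / ln (L n) = +∞`, then there is
`C₃ > 0` such that for each `α ∈ (0,1)` there is `N ≥ 1` with the property: whenever
`S^[N]` is uniformly `δ`-close to `T^[N]` on `U` and `A' ⊆ U` consists of points lying
on bi-infinite orbits of `S` in `A'`, then `dist_H(A', A) ≤ C₃ δ^α`. -/
theorem stmt17 {M : Type*} [MetricSpace M] (T : M → M)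
    (A U : Set M) (hA : A.Nonempty) (hAU : A ⊆ U) (hTU : Set.MapsTo T U U)
    (C γ : ℝ) (hC : 1 < C) (hγ : 0 < γ)
    (hattr : ∀ n : ℕ, ∀ x ∈ U, Metric.infDist (T^[n] x) A ≤ C * Real.exp (-γ * n))
    (L₁ : ℝ) (hL₁ : 1 < L₁) (L : ℕ → ℝ)
    (hLn : ∀ n : ℕ, 1 ≤ n → 1 < L n ∧ L n ≤ L₁ ^ n ∧
      ∀ x ∈ U, ∀ y ∈ U, dist (T^[n] x) (T^[n] y) ≤ L n * dist x y)
    (hlimsup : ∀ R : ℝ, ∃ᶠ n : ℕ in Filter.atTop, R ≤ (n : ℝ) / Real.log (L n)) :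
    ∃ C₃ > 0, ∀ α : ℝ, 0 < α → α < 1 → ∃ N : ℕ, 1 ≤ N ∧
      ∀ δ : ℝ, 0 < δ → δ < 1 → ∀ S : M → M,
        (∀ x ∈ U, dist (T^[N] x) (S^[N] x) ≤ δ) →
        ∀ A' : Set M, A' ⊆ U →
          (∀ a ∈ A', ∃ ξ : ℤ → M, (∀ n : ℤ, ξ n ∈ A') ∧ ξ 0 = a ∧
            ∀ n : ℤ, S (ξ n) = ξ (n + 1)) →
          ∀ a' ∈ A', Metric.infDist a' A ≤ C₃ * δ ^ α := by
  refine ⟨2 + C, by linarith, fun α hα0 hα1 => ?_⟩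
  have h1α : 0 < 1 - α := by linarith
  have hg : 0 < γ * (1 - α) := mul_pos hγ h1α
  obtain ⟨N, hN, hRN, hN1⟩ := ((hlimsup (1 / (γ * (1 - α)))).and_eventually
    ((Filter.eventually_ge_atTop (Nat.ceil (1 / (γ * (1 - α))))).and
      (Filter.eventually_ge_atTop 1))).exists
  have hNpos : (0 : ℝ) < N := by exact_mod_cast hN1
  have hN2 : 1 ≤ N * (γ * (1 - α)) := by
    have := Nat.le_of_ceil_le hRN
    rwa [div_le_iff₀ hg] at this
  obtain ⟨hL1, -, hLip⟩ := hLn N hN1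
  have hlog : Real.log (L N) ≤ N * (γ * (1 - α)) := by
    have hl : 0 < Real.log (L N) := Real.log_pos hL1
    rw [div_le_div_iff₀ hg hl] at hN
    linarith
  obtain ⟨l, hl⟩ : ∃ l, l = Real.exp (N * (γ * (1 - α))) := ⟨_, rfl⟩
  have hl2 : 2 ≤ l := by
    have := Real.add_one_le_exp (N * (γ * (1 - α)))
    linarith
  have hLl : L N ≤ l := by
    rw [hl]
    exact (Real.log_le_iff_le_exp (by linarith)).1 hlog
  refine ⟨N, hN1, fun δ hδ0 hδ1 S hS A' hA'U horb a' ha' => ?_⟩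
  obtain ⟨ξ, hξ, hξ0, hξS⟩ := horb a' ha'
  have hit : ∀ n : ℕ, ∀ i : ℤ, S^[n] (ξ i) = ξ (i + n) := by
    intro n
    induction n with
    | zero => intro i; simp
    | succ n ih =>
      intro i
      rw [Function.iterate_succ_apply, hξS, ih]
      congr 1
      push_cast
      ring
  have hTn : ∀ n : ℕ, ∀ x ∈ U, T^[n] x ∈ U := fun n x hx => hTU.iterate n hx
  have hstep : ∀ i : ℤ, dist (T^[N] (ξ i)) (ξ (i + N)) ≤ δ := by
    intro i
    rw [← hit]
    exact hS _ (hA'U (hξ i))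
  have key : ∀ m : ℕ, ∀ i : ℤ,
      dist (T^[N * (m + 1)] (ξ i)) (ξ (i + ((N * (m + 1) : ℕ) : ℤ))) ≤ (2 * l ^ m - 1) * δ := by
    intro m
    induction m with
    | zero => intro i; simpa using (hstep i).trans (by linarith)
    | succ m ih =>
      intro i
      have e1 : T^[N * (m + 1 + 1)] (ξ i) = T^[N] (T^[N * (m + 1)] (ξ i)) := by
        rw [← Function.iterate_add_apply]
        congr 1
        ring_nf
      have e2 : i + ((N * (m + 1 + 1) : ℕ) : ℤ) = i + ((N * (m + 1) : ℕ) : ℤ) + N := by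
        push_cast
        ring
      rw [e1, e2]
      have h1 := hLip _ (hTn (N * (m + 1)) _ (hA'U (hξ i))) _
        (hA'U (hξ (i + ((N * (m + 1) : ℕ) : ℤ))))
      have h2 := hstep (i + ((N * (m + 1) : ℕ) : ℤ))
      have h3 : L N * dist (T^[N * (m + 1)] (ξ i)) (ξ (i + ((N * (m + 1) : ℕ) : ℤ)))
          ≤ l * ((2 * l ^ m - 1) * δ) :=
        mul_le_mul hLl (ih i) dist_nonneg (by linarith)
      have h4 := (dist_triangle _ _ _).trans (add_le_add (h1.trans h3) h2)
      refine h4.trans ?_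
      have : 0 ≤ (l - 2) * δ := mul_nonneg (by linarith) hδ0.le
      rw [pow_succ]
      nlinarith
  obtain ⟨t, ht⟩ : ∃ t, t = -Real.log δ := ⟨_, rfl⟩
  have ht0 : 0 < t := by
    have := Real.log_neg hδ0 hδ1
    linarith
  have hgN : 0 < γ * N := mul_pos hγ hNpos
  obtain ⟨m, hm⟩ : ∃ m, m = Nat.floor (α * t / (γ * N)) := ⟨_, rfl⟩
  have hm1 : (m : ℝ) * (γ * N) ≤ α * t := by
    rw [← le_div_iff₀ hgN, hm]
    exact Nat.floor_le (by positivity)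
  have hm2 : α * t ≤ (m + 1) * (γ * N) := by
    rw [← div_le_iff₀ hgN, hm]
    exact (Nat.lt_floor_add_one _).le
  have hδe : δ = Real.exp (-t) := by rw [ht, neg_neg, Real.exp_log hδ0]
  have hδα : δ ^ α = Real.exp (-(α * t)) := by
    rw [hδe, ← Real.exp_mul]
    congr 1
    ring
  have hb1 : l ^ m * δ ≤ δ ^ α := by
    rw [hδα, hl, hδe, ← Real.exp_nat_mul, ← Real.exp_add, Real.exp_le_exp]
    have := mul_le_mul_of_nonneg_right hm1 h1α.le
    nlinarith [mul_nonneg ht0.le (sq_nonneg (1 - α))]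
  have hk := key m (-((N * (m + 1) : ℕ) : ℤ))
  rw [neg_add_cancel, hξ0] at hk
  have ha := hattr (N * (m + 1)) _ (hA'U (hξ (-((N * (m + 1) : ℕ) : ℤ))))
  have hb2 : Real.exp (-γ * ((N * (m + 1) : ℕ) : ℝ)) ≤ δ ^ α := by
    rw [hδα, Real.exp_le_exp]
    push_cast
    nlinarith
  have hb3 := mul_le_mul_of_nonneg_left hb2 (by linarith : (0 : ℝ) ≤ C)
  rw [dist_comm] at hk
  have hf := Metric.infDist_le_infDist_add_dist (s := A) (x := a')
    (y := T^[N * (m + 1)] (ξ (-((N * (m + 1) : ℕ) : ℤ))))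
  nlinarith
end

section
/- Let X be a real Hilbert space and let S and U be closed subspaces of X with S ∩ U = {0} and S + U = X. Then the composition of the orthogonal projections satisfies ‖P_S ∘ P_U‖ < 1, where P_S and P_U denote the orthogonal projections of X onto S and onto U, and ‖·‖ is the operator norm. -/
theorem orthoProj_pyth {X : Type*} [NormedAddCommGroup X] [InnerProductSpace ℝ X]
    {E : Submodule ℝ X} {P : X →L[ℝ] X} (h : IsOrthoProjOn E P) (x : X) :
    ‖x‖ ^ 2 = ‖P x‖ ^ 2 + ‖x - P x‖ ^ 2 := by
  have h0 : inner ℝ (P x) (x - P x) = 0 :=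
    (Submodule.mem_orthogonal E _).1 (h x).2 _ (h x).1
  have := norm_add_sq_eq_norm_sq_add_norm_sq_of_inner_eq_zero (P x) (x - P x) h0
  rw [add_sub_cancel] at this
  nlinarith [this]

/-- If `S` and `U` are closed subspaces of a real Hilbert space with `S ∩ U = {0}`
and `S + U = X`, then the composition of the orthogonal projections onto `S` and
onto `U` has operator norm strictly less than `1`. -/
theorem stmt18 {X : Type*} [NormedAddCommGroup X] [InnerProductSpace ℝ X] [CompleteSpace X]
    (S U : Submodule ℝ X)
    (hS : IsClosed ((S : Submodule ℝ X) : Set X)) (hU : IsClosed ((U : Submodule ℝ X) : Set X))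
    (hinf : S ⊓ U = ⊥) (hsup : S ⊔ U = ⊤)
    (PS PU : X →L[ℝ] X) (hPS : IsOrthoProjOn S PS) (hPU : IsOrthoProjOn U PU) :
    ‖PS.comp PU‖ < 1 := by
  have hc : IsCompl U S := by
    refine ⟨disjoint_iff.2 ?_, codisjoint_iff.2 ?_⟩
    · rw [inf_comm, hinf]
    · rw [sup_comm, hsup]
  have ht := Submodule.IsCompl.isTopCompl_of_isClosed hc hU hS
  let Q : X →L[ℝ] X := U.projectionL S ht
  have hQU : ∀ u ∈ U, Q u = u := fun u hu => by
    have := Submodule.projection_apply_left hc ⟨u, hu⟩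
    simpa [Q] using this
  have hQS : ∀ s ∈ S, Q s = 0 := fun s hs => by
    have := Submodule.projection_apply_right hc ⟨s, hs⟩
    simpa [Q] using this
  set C : ℝ := ‖Q‖ + 1 with hC
  have hC1 : 1 ≤ C := by have := norm_nonneg Q; linarith
  have hCp : 0 < C ^ 2 := by positivity
  have hd : 1 / C ^ 2 ≤ 1 := by
    rw [div_le_one hCp]; nlinarith
  have hd0 : 0 < 1 / C ^ 2 := by positivity
  have key : ∀ x, ‖PS.comp PU x‖ ≤ √(1 - 1 / C ^ 2) * ‖x‖ := by
    intro x
    have h1 := orthoProj_pyth hPU x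
    have h2 := orthoProj_pyth hPS (PU x)
    have h3 : ‖PU x‖ ≤ C * ‖PU x - PS (PU x)‖ := by
      have e : Q (PU x - PS (PU x)) = PU x := by
        rw [map_sub, hQU _ (hPU x).1, hQS _ (hPS _).1, sub_zero]
      calc ‖PU x‖ = ‖Q (PU x - PS (PU x))‖ := by rw [e]
        _ ≤ ‖Q‖ * ‖PU x - PS (PU x)‖ := Q.le_opNorm _
        _ ≤ C * ‖PU x - PS (PU x)‖ := by gcongr; linarith
    have h4 : 1 / C ^ 2 * ‖PU x‖ ^ 2 ≤ ‖PU x - PS (PU x)‖ ^ 2 := by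
      rw [one_div_mul_eq_div, div_le_iff₀ hCp]
      have := pow_le_pow_left₀ (norm_nonneg _) h3 2
      rw [mul_pow] at this
      linarith
    have h5 : ‖PS (PU x)‖ ^ 2 ≤ (√(1 - 1 / C ^ 2) * ‖x‖) ^ 2 := by
      rw [mul_pow, Real.sq_sqrt (by linarith)]
      have h6 : (1 - 1 / C ^ 2) * ‖PU x‖ ^ 2 ≤ (1 - 1 / C ^ 2) * ‖x‖ ^ 2 :=
        mul_le_mul_of_nonneg_left (by nlinarith [sq_nonneg ‖x - PU x‖]) (by linarith)
      linarith
    exact (pow_le_pow_iff_left₀ (norm_nonneg _) (by positivity) two_ne_zero).1 h5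
  exact lt_of_le_of_lt (ContinuousLinearMap.opNorm_le_bound _ (Real.sqrt_nonneg _) key)
    (by rw [Real.sqrt_lt' one_pos]; linarith)
end

section
/- Let (E_k)_{k∈ℤ} be a family of real Banach spaces, and for each k ∈ ℤ let A_k : E_k → E_{k+1} be a bounded linear map, let w_{k+1} : E_k → E_{k+1} be a map, and set φ_k := A_k + w_{k+1} (pointwise). Assume there exist bounded idempotent operators P_k, Q_k on E_k and constants λ ∈ (0,1), M > 0, Δ > 0, k₁ > 0 such that for all k ∈ ℤ: (1) P_k + Q_k = Id, ‖P_k‖ ≤ M, ‖Q_k‖ ≤ M, ‖A_k ∘ P_k‖ ≤ λ, and range(A_k ∘ P_k) ⊆ range(P_{k+1}); (2) there are bounded linear maps B_k : E_{k+1} → E_k with B_k(range(Q_{k+1})) ⊆ range(Q_k), ‖B_k ∘ Q_{k+1}‖ ≤ λ, and A_k(B_k y) = y for every y ∈ range(Q_{k+1}); (3) ‖w_{k+1}(v) − w_{k+1}(v')‖ ≤ k₁‖v − v'‖ whenever ‖v‖ ≤ Δ and ‖v'‖ ≤ Δ; (4) k₁ N₁ < 1 where N₁ = M(1+λ)/(1−λ).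 Then there exist d₁ > 0 and L > 0 such that: if δ satisfies 0 ≤ δ ≤ d₁ and ‖φ_k(0)‖ ≤ δ for all k ∈ ℤ, then there exist vectors v_k ∈ E_k with ‖v_k‖ ≤ L δ and φ_k(v_k) = v_{k+1} for all k ∈ ℤ. -/
open Set in
/-- Banach fixed point theorem on a ball of an `ℓ^∞` product. -/
theorem fixed_point_aux {G : ℤ → Type*} [∀ k, NormedAddCommGroup (G k)]
    [∀ k, CompleteSpace (G k)]
    (F : (∀ k, G k) → (∀ k, G k)) (r c : ℝ) (hr : 0 ≤ r) (hc0 : 0 ≤ c) (hc1 : c < 1)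
    (hF : ∀ x : ∀ k, G k, (∀ k, ‖x k‖ ≤ r) → ∀ k, ‖F x k‖ ≤ r)
    (hL : ∀ x y : ∀ k, G k, (∀ k, ‖x k‖ ≤ r) → (∀ k, ‖y k‖ ≤ r) → ∀ D : ℝ, 0 ≤ D →
      (∀ k, ‖x k - y k‖ ≤ D) → ∀ k, ‖F x k - F y k‖ ≤ c * D) :
    ∃ x : ∀ k, G k, (∀ k, ‖x k‖ ≤ r) ∧ F x = x := by
  let X := Metric.closedBall (0 : lp G ⊤) r
  have hX : ∀ x : X, ∀ k, ‖(x : lp G ⊤) k‖ ≤ r := fun x k =>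
    (lp.norm_apply_le_norm (by simp) x.1 k).trans (mem_closedBall_zero_iff.1 x.2)
  let T : X → X := fun x => ⟨⟨F x.1, memℓp_infty ⟨r, by
      rintro _ ⟨k, rfl⟩; exact hF _ (hX x) k⟩⟩, by
      rw [mem_closedBall_zero_iff]
      exact lp.norm_le_of_forall_le hr (fun k => hF _ (hX x) k)⟩
  have hT : ContractingWith ⟨c, hc0⟩ T := by
    refine ⟨by exact_mod_cast hc1, LipschitzWith.of_dist_le_mul fun x y => ?_⟩
    rw [Subtype.dist_eq, Subtype.dist_eq, dist_eq_norm, dist_eq_norm]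
    refine lp.norm_le_of_forall_le (by positivity) (fun k => ?_)
    exact hL _ _ (hX x) (hX y) _ (norm_nonneg _)
      (fun k => lp.norm_apply_le_norm (by simp) (x.1 - y.1) k) k
  have : CompleteSpace X := Metric.isClosed_closedBall.completeSpace_coe
  have : Nonempty X := ⟨⟨0, by simpa [X] using hr⟩⟩
  refine ⟨(hT.fixedPoint T).1, hX _, ?_⟩
  have h := hT.fixedPoint_isFixedPt
  exact congrArg (fun z : X => ((z : lp G ⊤) : ∀ k, G k)) h


/-- Abstract shadowing via the Banach fixed point theorem: given a bi-infinite family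
of Banach spaces `E k` and maps `φ k = A k + w k : E k → E (k+1)` admitting uniformly
bounded hyperbolic splittings `P k + Q k = Id` with contraction constant `λ`, inverse
maps `B k` on the unstable parts, Lipschitz-small nonlinearities `w k`, and
`k₁ · M(1+λ)/(1−λ) < 1`, there exist `d₁, L > 0` such that whenever `‖φ k (0)‖ ≤ δ ≤ d₁`
for all `k`, there are vectors `v k ∈ E k` with `‖v k‖ ≤ L δ` and `φ k (v k) = v (k+1)`. -/
theorem stmt19 (E : ℤ → Type*) [∀ k, NormedAddCommGroup (E k)] [∀ k, NormedSpace ℝ (E k)]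
    [∀ k, CompleteSpace (E k)]
    (A : ∀ k : ℤ, E k →L[ℝ] E (k + 1))
    (w : ∀ k : ℤ, E k → E (k + 1))
    (P Q : ∀ k : ℤ, E k →L[ℝ] E k)
    (B : ∀ k : ℤ, E (k + 1) →L[ℝ] E k)
    (lam M Δ k₁ : ℝ) (hlam0 : 0 < lam) (hlam1 : lam < 1) (hM : 0 < M)
    (hΔ : 0 < Δ) (hk₁ : 0 < k₁)
    (hPidem : ∀ k, (P k).comp (P k) = P k)
    (hQidem : ∀ k, (Q k).comp (Q k) = Q k)
    (hPQ : ∀ k, P k + Q k = ContinuousLinearMap.id ℝ (E k))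
    (hPnorm : ∀ k, ‖P k‖ ≤ M) (hQnorm : ∀ k, ‖Q k‖ ≤ M)
    (hAP : ∀ k, ‖(A k).comp (P k)‖ ≤ lam)
    (hAPrange : ∀ k, LinearMap.range ((A k).comp (P k)).toLinearMap ≤ LinearMap.range (P (k + 1)).toLinearMap)
    (hBrange : ∀ k, ∀ y ∈ LinearMap.range (Q (k + 1)).toLinearMap, B k y ∈ LinearMap.range (Q k).toLinearMap)
    (hBnorm : ∀ k, ‖(B k).comp (Q (k + 1))‖ ≤ lam)
    (hAB : ∀ k, ∀ y ∈ LinearMap.range (Q (k + 1)).toLinearMap, A k (B k y) = y)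
    (hw : ∀ (k : ℤ) (v v' : E k), ‖v‖ ≤ Δ → ‖v'‖ ≤ Δ → ‖w k v - w k v'‖ ≤ k₁ * ‖v - v'‖)
    (hsmall : k₁ * (M * (1 + lam) / (1 - lam)) < 1) :
    ∃ d₁ > 0, ∃ L > 0, ∀ δ : ℝ, 0 ≤ δ → δ ≤ d₁ →
      (∀ k : ℤ, ‖A k 0 + w k 0‖ ≤ δ) →
      ∃ v : (k : ℤ) → E k, (∀ k : ℤ, ‖v k‖ ≤ L * δ) ∧
        ∀ k : ℤ, A k (v k) + w k (v k) = v (k + 1) := by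
  have h1l : 0 < 1 - lam := by linarith
  have hc1 : lam + M * k₁ * (1 + lam) < 1 := by
    have h : k₁ * (M * (1 + lam)) / (1 - lam) < 1 := by rwa [mul_div_assoc]
    rw [div_lt_one h1l] at h
    linarith
  obtain ⟨c, hc⟩ : ∃ c, c = lam + M * k₁ * (1 + lam) := ⟨_, rfl⟩
  rw [← hc] at hc1
  have hc0 : 0 ≤ c := by rw [hc]; positivity
  have h1c : 0 < 1 - c := by linarith
  have hLpos : 0 < (1 + lam) * (M / (1 - c)) := by positivity
  refine ⟨Δ / ((1 + lam) * (M / (1 - c))), by positivity, (1 + lam) * (M / (1 - c)), hLpos, ?_⟩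
  intro δ hδ0 hδ hw0
  obtain ⟨r, hr⟩ : ∃ r, r = M / (1 - c) * δ := ⟨_, rfl⟩
  have hr0 : 0 ≤ r := by rw [hr]; positivity
  have hrM : c * r + M * δ = r := by rw [hr]; field_simp; ring
  have hrΔ : (1 + lam) * r ≤ Δ := by
    rw [le_div_iff₀ hLpos] at hδ
    rw [hr]; linarith
  have hPP : ∀ k x, P k (P k x) = P k x := fun k x => DFunLike.congr_fun (hPidem k) x
  have hQQ : ∀ k x, Q k (Q k x) = Q k x := fun k x => DFunLike.congr_fun (hQidem k) x
  have hsum : ∀ k x, P k x + Q k x = x := fun k x => DFunLike.congr_fun (hPQ k) x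
  have hPn : ∀ k x, ‖P k x‖ ≤ M * ‖x‖ := fun k x => (P k).le_of_opNorm_le (hPnorm k) x
  have hQn : ∀ k x, ‖Q k x‖ ≤ M * ‖x‖ := fun k x => (Q k).le_of_opNorm_le (hQnorm k) x
  have hAPn : ∀ k x, ‖A k (P k x)‖ ≤ lam * ‖x‖ := fun k x =>
    ((A k).comp (P k)).le_of_opNorm_le (hAP k) x
  have hBQn : ∀ k x, ‖B k (Q (k + 1) x)‖ ≤ lam * ‖x‖ := fun k x =>
    ((B k).comp (Q (k + 1))).le_of_opNorm_le (hBnorm k) x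
  have hAPr : ∀ k x, P (k + 1) (A k (P k x)) = A k (P k x) := by
    intro k x
    obtain ⟨y, hy⟩ := hAPrange k ⟨x, rfl⟩
    have hy' : P (k + 1) y = A k (P k x) := hy
    rw [← hy', hPP]
  have hBQr : ∀ k x, Q k (B k (Q (k + 1) x)) = B k (Q (k + 1) x) := by
    intro k x
    obtain ⟨y, hy⟩ := hBrange k (Q (k + 1) x) ⟨x, rfl⟩
    have hy' : Q k y = B k (Q (k + 1) x) := hy
    rw [← hy', hQQ]
  have hABQ : ∀ k x, A k (B k (Q (k + 1) x)) = Q (k + 1) x := fun k x => hAB k _ ⟨x, rfl⟩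
  -- shift of sequences
  obtain ⟨S, hS⟩ : ∃ S : (∀ k : ℤ, E (k + 1)) → ∀ k : ℤ, E k, ∀ f k, S f (k + 1) = f k :=
    ⟨fun f => Equiv.piCongrLeft E (Equiv.addRight (1 : ℤ)) f, fun f k =>
      Equiv.piCongrLeft_apply_apply E (Equiv.addRight (1 : ℤ)) f k⟩
  have hall : ∀ p : ℤ → Prop, (∀ k, p (k + 1)) → ∀ k, p k := fun p h k => by
    have := h (k - 1)
    rwa [sub_add_cancel] at this
  let V : (∀ k, E k × E k) → ∀ k, E k := fun x k => (x k).1 - lam • (x k).2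
  let F : (∀ k, E k × E k) → ∀ k, E k × E k := fun x k =>
    (S (fun j => A j (P j (x j).1) + P (j + 1) (w j (V x j))) k,
      B k (Q (k + 1) (x (k + 1)).2) + lam⁻¹ • B k (Q (k + 1) (Q (k + 1) (w k (V x k)))))
  have hVb : ∀ (a b : ∀ k, E k × E k) (D : ℝ), (∀ k, ‖a k - b k‖ ≤ D) →
      ∀ k, ‖V a k - V b k‖ ≤ (1 + lam) * D := by
    intro a b D hD k
    have e : V a k - V b k = (a k - b k).1 - lam • (a k - b k).2 := by
      simp only [V, Prod.fst_sub, Prod.snd_sub, smul_sub]; abel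
    rw [e]
    have h1 := (norm_fst_le (a k - b k)).trans (hD k)
    have h2 := (norm_snd_le (a k - b k)).trans (hD k)
    calc _ ≤ ‖(a k - b k).1‖ + ‖lam • (a k - b k).2‖ := norm_sub_le _ _
      _ = ‖(a k - b k).1‖ + lam * ‖(a k - b k).2‖ := by
        rw [norm_smul, Real.norm_of_nonneg hlam0.le]
      _ ≤ D + lam * D := by gcongr
      _ = _ := by ring
  have hV : ∀ (a : ∀ k, E k × E k), (∀ k, ‖a k‖ ≤ r) → ∀ k, ‖V a k‖ ≤ (1 + lam) * r := by
    intro a ha k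
    have := hVb a 0 r (by simpa using ha) k
    simpa [V] using this
  have hP2 : ∀ k (x : E k) (u : E (k + 1)) (D W : ℝ), ‖x‖ ≤ D → ‖u‖ ≤ W →
      ‖A k (P k x) + P (k + 1) u‖ ≤ lam * D + M * W := by
    intro k x u D W hx hu
    refine (norm_add_le _ _).trans (add_le_add ((hAPn k x).trans ?_) ((hPn _ u).trans ?_))
    <;> gcongr
  have hQ2 : ∀ k (x : E (k + 1)) (u : E (k + 1)) (D W : ℝ), ‖x‖ ≤ D → ‖u‖ ≤ W →
      ‖B k (Q (k + 1) x) + lam⁻¹ • B k (Q (k + 1) (Q (k + 1) u))‖ ≤ lam * D + M * W := by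
    intro k x u D W hx hu
    refine (norm_add_le _ _).trans (add_le_add ((hBQn k x).trans ?_) ?_)
    · gcongr
    · rw [norm_smul, norm_inv, Real.norm_of_nonneg hlam0.le, inv_mul_le_iff₀ hlam0]
      refine (hBQn k _).trans ?_
      gcongr
      refine (hQn _ u).trans ?_
      gcongr
  obtain ⟨x, hxr, hx⟩ := fixed_point_aux F r c hr0 hc0 hc1 (by
    intro x hx k
    have hwb : ∀ k, ‖w k (V x k)‖ ≤ k₁ * ((1 + lam) * r) + δ := by
      intro k
      have h1 := hw k (V x k) 0 ((hV x hx k).trans hrΔ) (by simpa using hΔ.le)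
      have h2 := hw0 k
      rw [map_zero, zero_add] at h2
      rw [sub_zero] at h1
      have h3 := norm_sub_norm_le (w k (V x k)) (w k 0)
      have h4 := mul_le_mul_of_nonneg_left (hV x hx k) hk₁.le
      linarith
    have e : lam * r + M * (k₁ * ((1 + lam) * r) + δ) = r := by
      rw [hc] at hrM; linarith
    rw [Prod.norm_def]
    refine max_le ?_ ?_
    · revert k
      refine hall _ fun k => ?_
      simp only [F, hS]
      exact (hP2 k _ _ _ _ ((norm_fst_le _).trans (hx k)) (hwb k)).trans e.le
    · exact (hQ2 k _ _ _ _ ((norm_snd_le _).trans (hx _)) (hwb k)).trans e.le) (by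
    intro x y hx hy D hD hxy k
    have hwb : ∀ k, ‖w k (V x k) - w k (V y k)‖ ≤ k₁ * ((1 + lam) * D) := by
      intro k
      refine (hw k _ _ ((hV x hx k).trans hrΔ) ((hV y hy k).trans hrΔ)).trans ?_
      have := hVb x y D hxy k
      gcongr
    have e : lam * D + M * (k₁ * ((1 + lam) * D)) = c * D := by
      rw [hc]; ring
    rw [Prod.norm_def]
    refine max_le ?_ ?_
    · revert k
      refine hall _ fun k => ?_
      simp only [F, hS, Prod.fst_sub]
      refine le_trans (le_of_eq ?_)
        ((hP2 k _ _ _ _ ((norm_fst_le _).trans (hxy k)) (hwb k)).trans e.le)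
      congr 1
      simp only [map_sub, Prod.fst_sub]
      abel
    · simp only [F, Prod.snd_sub]
      refine le_trans (le_of_eq ?_)
        ((hQ2 k _ _ _ _ ((norm_snd_le _).trans (hxy (k + 1))) (hwb k)).trans e.le)
      congr 1
      simp only [map_sub, Prod.snd_sub, smul_sub]
      abel)
  have hx1 : ∀ k, (x (k + 1)).1 = A k (P k (x k).1) + P (k + 1) (w k (V x k)) := by
    intro k
    have h := congrArg Prod.fst (congrFun hx (k + 1))
    simp only [F, hS] at h
    exact h.symm
  have hx2 : ∀ k, (x k).2 = B k (Q (k + 1) (x (k + 1)).2)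
      + lam⁻¹ • B k (Q (k + 1) (Q (k + 1) (w k (V x k)))) := fun k =>
    (congrArg Prod.snd (congrFun hx k)).symm
  have hxP : ∀ k, P k (x k).1 = (x k).1 := by
    refine hall _ fun k => ?_
    rw [hx1, map_add, hAPr, hPP]
  have hxQ : ∀ k, Q k (x k).2 = (x k).2 := by
    intro k
    rw [hx2, map_add, map_smul, hBQr, hBQr]
  refine ⟨V x, fun k => ?_, fun k => ?_⟩
  · refine (hV x hxr k).trans (le_of_eq ?_)
    rw [hr]; ring
  · have hA2 : A k (x k).2 = (x (k + 1)).2 + lam⁻¹ • Q (k + 1) (w k (V x k)) := by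
      rw [hx2 k, map_add, map_smul, hABQ, hABQ, hQQ, hxQ]
    have h1 := hx1 k
    rw [hxP] at h1
    have h3 : A k (V x k) = A k (x k).1 - lam • A k (x k).2 := by
      simp only [V, map_sub, map_smul]
    have h4 : V x (k + 1) = (x (k + 1)).1 - lam • (x (k + 1)).2 := rfl
    have h5 := hsum (k + 1) (w k (V x k))
    rw [h3, h4, h1, hA2, smul_add, smul_inv_smul₀ hlam0.ne']
    nth_rewrite 2 [← h5]
    abel
end
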